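/- arXiv:0905.1858 — 3 statements merged into one kernel-verified Lean document; each statement's English description precedes it below -/
import Mathlib

section
/- Let M ⊂ ℝ^m be compact, F a bounded standard set-valued map, T > 0 and C > 0, and let K_C be the set of Lipschitz paths y : [0,T] → ℝ^m with Lipschitz constant at most ‖F‖ + C + 1 and y(0) ∈ M, where ‖F‖ = sup_{x∈Φ^T(M)} sup_{y∈F(x)} ‖y‖ and Φ^T(M) = closure(⋃_{s∈[0,T]} Φ_s(M)). Then for every α > 0 there exist ε > 0 and δ₀ > 0 such that for every δ < δ₀ and every z ∈ K_C: if d_{[0,T]}(z, Λ^δ(z)) < ε then d_{[0,T]}(z, S_{[0,T]}) < α, where S_{[0,T]} is the set of restrictions to [0,T] of solutions of dx/dt ∈ F(x) starting in M, and d_{[0,T]} is the distance induced by the uniform norm on [0,T]. -/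
open MeasureTheory Filter Topology Metric Set Pointwise

noncomputable section

/-- `ℝ^m` with the Euclidean norm. -/
abbrev Euc (m : ℕ) := EuclideanSpace ℝ (Fin m)

/-- A standard set-valued map `F : ℝ^m ⇒ ℝ^m`: nonempty compact convex values,
closed graph, and linear growth. -/
def IsStandardSVM {m : ℕ} (F : Euc m → Set (Euc m)) : Prop :=
  (∀ x, (F x).Nonempty ∧ IsCompact (F x) ∧ Convex ℝ (F x)) ∧
  IsClosed {p : Euc m × Euc m | p.2 ∈ F p.1} ∧
  ∃ c > 0, ∀ x, ∀ z ∈ F x, ‖z‖ ≤ c * (1 + ‖x‖)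

/-- A solution of the differential inclusion `dx/dt ∈ F x`: an absolutely continuous
curve `z : ℝ → ℝ^m` (written as the integral of a locally integrable derivative `h`)
with `h t ∈ F (z t)` for almost every `t`. -/
def IsSolution {m : ℕ} (F : Euc m → Set (Euc m)) (z : ℝ → Euc m) : Prop :=
  Continuous z ∧ ∃ h : ℝ → Euc m,
    (∀ a b : ℝ, IntervalIntegrable h volume a b) ∧
    (∀ᵐ t ∂volume, h t ∈ F (z t)) ∧
    ∀ t : ℝ, z t = z 0 + ∫ u in (0:ℝ)..t, h u

/-- `Φ_t(x)`: the set of points reached at time `t` by solutions starting at `x`. -/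
def PhiT {m : ℕ} (F : Euc m → Set (Euc m)) (t : ℝ) (x : Euc m) : Set (Euc m) :=
  {y | ∃ z : ℝ → Euc m, IsSolution F z ∧ z 0 = x ∧ z t = y}

/-- `ω_Φ(x) = ⋂_{t ≥ 0} closure (Φ_{[t,∞)}(x))`. -/
def omegaLimitSV {m : ℕ} (F : Euc m → Set (Euc m)) (x : Euc m) : Set (Euc m) :=
  ⋂ t ∈ Ici (0:ℝ), closure {y | ∃ s ≥ t, y ∈ PhiT F s x}

/-- An attractor for the set-valued dynamical system induced by `F`: a nonempty,
compact, invariant set admitting a neighborhood `U` with `Φ_t(U) ⊆ N^ε(A)` for all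
`t` large enough. -/
def IsAttractorSV {m : ℕ} (F : Euc m → Set (Euc m)) (A : Set (Euc m)) : Prop :=
  A.Nonempty ∧ IsCompact A ∧
  (∀ x ∈ A, ∃ z : ℝ → Euc m, IsSolution F z ∧ z 0 = x ∧ Set.range z ⊆ A) ∧
  ∃ U : Set (Euc m), IsOpen U ∧ A ⊆ U ∧
    ∀ ε > 0, ∃ tε > 0, ∀ t ≥ tε, ∀ x ∈ U, PhiT F t x ⊆ Metric.thickening ε A

/-- The basin of attraction `B(A) = {x | ω_Φ(x) ⊆ A}`. -/
def basinSV {m : ℕ} (F : Euc m → Set (Euc m)) (A : Set (Euc m)) : Set (Euc m) :=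
  {x | omegaLimitSV F x ⊆ A}

/-- The limit set `L(X) = ⋂_{t ≥ 0} closure {X s : s ≥ t}` of a path. -/
def limitSet {m : ℕ} (X : ℝ → Euc m) : Set (Euc m) :=
  ⋂ t ∈ Ici (0:ℝ), closure {y | ∃ s ≥ t, X s = y}

/-- `inf_{z ∈ S_Φ} sup_{u ∈ [0,T]} ‖z u - Y u‖`. -/
def distToSol {m : ℕ} (F : Euc m → Set (Euc m)) (Y : ℝ → Euc m) (T : ℝ) : ℝ :=
  sInf {d | ∃ z : ℝ → Euc m, IsSolution F z ∧ d = ⨆ u : Icc (0:ℝ) T, ‖z u - Y u‖}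

/-- Asymptotic pseudotrajectory of the set-valued dynamical system induced by `F`. -/
def IsAPT {m : ℕ} (F : Euc m → Set (Euc m)) (X : ℝ → Euc m) : Prop :=
  ∀ T > 0, Tendsto (fun t => distToSol F (fun u => X (t + u)) T) atTop (𝓝 0)

/-- A point `p` is attainable by the process `X`: for every `t > 0` and every
neighborhood `U` of `p`, `P(∃ s ≥ t, X s ∈ U) > 0`. -/
def Attainable {m : ℕ} {Ω : Type*} [MeasurableSpace Ω] (μ : Measure Ω)
    (X : ℝ → Ω → Euc m) (p : Euc m) : Prop :=
  ∀ t > 0, ∀ U ∈ 𝓝 p, 0 < μ {ω | ∃ s ≥ t, X s ω ∈ U}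

/-- `τ_n = γ_1 + ⋯ + γ_n`. -/
def tauOf (γ : ℕ → ℝ) (n : ℕ) : ℝ := ∑ i ∈ Finset.range n, γ (i + 1)

/-- `m(t) = sup {j | τ_j ≤ t}`. -/
def mIdx (γ : ℕ → ℝ) (t : ℝ) : ℕ := sSup {j | tauOf γ j ≤ t}

/-- Hypothesis H1: there is `w t α T` decreasing to `0` in `t` dominating the
conditional probability that `sup_{s ≥ t} inf_{z ∈ S_Φ} sup_{u ∈ [0,T]} ‖z u − X (s+u)‖ ≥ α`. -/
def HypH1 {m : ℕ} {Ω : Type*} [MeasurableSpace Ω] (μ : Measure Ω)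
    (𝓕 : ℝ → MeasurableSpace Ω) (F : Euc m → Set (Euc m)) (X : ℝ → Ω → Euc m) : Prop :=
  ∃ w : ℝ → ℝ → ℝ → ℝ,
    (∀ α > 0, ∀ T > 0, Antitone (fun t => w t α T) ∧ Tendsto (fun t => w t α T) atTop (𝓝 0)) ∧
    ∀ α > 0, ∀ T > 0, ∀ t : ℝ, ∀ᵐ ω ∂μ,
      (μ[Set.indicator {ω' | α ≤ ⨆ s : Ici t, distToSol F (fun u => X ((s : ℝ) + u) ω') T}
          (fun _ => (1:ℝ)) | 𝓕 t]) ω ≤ w t α T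

/-- `F^δ(x) = {y | ∃ z ∈ B(x,δ), dist(y, F z) < δ}`, with the convention `F^0 = F`. -/
def Fdelta {m : ℕ} (F : Euc m → Set (Euc m)) (δ : ℝ) (x : Euc m) : Set (Euc m) :=
  if δ = 0 then F x
  else {y | ∃ z : Euc m, dist z x < δ ∧ Metric.infDist y (F z) < δ}

/-- A `(δ(·), V(·))`-perturbed solution of `dx/dt ∈ F x`. -/
def IsPerturbedSolution {m : ℕ} (F : Euc m → Set (Euc m)) (δ : ℝ → ℝ) (V : ℝ → Euc m)
    (y : ℝ → Euc m) : Prop :=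
  Continuous y ∧ (∀ t > 0, 0 < δ t) ∧ Antitone δ ∧ Tendsto δ atTop (𝓝 0) ∧
  (∀ a b : ℝ, IntervalIntegrable V volume a b) ∧
  (∀ T > 0, Tendsto (fun t => ⨆ u : Icc (0:ℝ) T, ‖∫ r in t..(t + (u : ℝ)), V r‖)
    atTop (𝓝 0)) ∧
  ∃ h : ℝ → Euc m, (∀ a b : ℝ, IntervalIntegrable h volume a b) ∧
    (∀ᵐ t ∂(volume.restrict (Ioi (0:ℝ))), h t - V t ∈ Fdelta F (δ t) (y t)) ∧
    ∀ t ∈ Ici (0:ℝ), y t = y 0 + ∫ u in (0:ℝ)..t, h u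

/-- `Δ(n,T) = sup_{n < k ≤ m(τ_n + T)} ‖∑_{i=n}^{k-1} γ_{i+1} U_{i+1}‖`. -/
def DeltaNT {m : ℕ} {Ω : Type*} (γ : ℕ → ℝ) (U : ℕ → Ω → Euc m) (T : ℝ) (n : ℕ)
    (ω : Ω) : ℝ :=
  ⨆ k : {k : ℕ // n < k ∧ k ≤ mIdx γ (tauOf γ n + T)},
    ‖∑ i ∈ Finset.Ico n (k : ℕ), γ (i + 1) • U (i + 1) ω‖

/-- Condition (bruit2): the conditional probability that `sup_{m ≥ n} Δ(m,T) ≥ ε` is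
dominated by some `w n ε T` decreasing to `0` in `n`. -/
def Bruit2 {m : ℕ} {Ω : Type*} [MeasurableSpace Ω] (μ : Measure Ω)
    (𝓕 : ℕ → MeasurableSpace Ω) (γ : ℕ → ℝ) (U : ℕ → Ω → Euc m) : Prop :=
  ∃ w : ℕ → ℝ → ℝ → ℝ,
    (∀ ε > 0, ∀ T > 0, Antitone (fun n => w n ε T) ∧ Tendsto (fun n => w n ε T) atTop (𝓝 0)) ∧
    ∀ ε > 0, ∀ T > 0, ∀ n : ℕ, ∀ᵐ ω ∂μ,
      (μ[Set.indicator {ω' | ε ≤ ⨆ k : Ici n, DeltaNT γ U T (k : ℕ) ω'}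
          (fun _ => (1:ℝ)) | 𝓕 n]) ω ≤ w n ε T

/-- Topological `limsup` of a sequence of sets: points whose every neighborhood
meets infinitely many of the sets. -/
def setLimsup {X : Type*} [TopologicalSpace X] (A : ℕ → Set X) : Set X :=
  {y | ∀ U ∈ 𝓝 y, {n | (U ∩ A n).Nonempty}.Infinite}

/-- The operator `Λ^δ` on continuous paths `[0,T] → ℝ^m` (with `Λ^0 = Λ`). -/
def LambdaD {m : ℕ} (F : Euc m → Set (Euc m)) (T : ℝ) (hT : 0 ≤ T) (δ : ℝ)
    (z : C(Icc (0:ℝ) T, Euc m)) : Set C(Icc (0:ℝ) T, Euc m) :=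
  {y | ∃ h : ℝ → Euc m, IntervalIntegrable h volume 0 T ∧
    (∀ u : Icc (0:ℝ) T, h u ∈ Fdelta F δ (z u)) ∧
    ∀ τ : Icc (0:ℝ) T, y τ = z ⟨0, Set.left_mem_Icc.mpr hT⟩ + ∫ u in (0:ℝ)..(τ : ℝ), h u}

/-- `Φ^T(M) = closure (⋃_{s ∈ [0,T]} Φ_s(M))`. -/
def PhiTM {m : ℕ} (F : Euc m → Set (Euc m)) (T : ℝ) (M : Set (Euc m)) : Set (Euc m) :=
  closure (⋃ s ∈ Icc (0:ℝ) T, ⋃ x ∈ M, PhiT F s x)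

/-- `‖F‖ = sup_{x ∈ Φ^T(M)} sup_{y ∈ F x} ‖y‖`. -/
def normF {m : ℕ} (F : Euc m → Set (Euc m)) (T : ℝ) (M : Set (Euc m)) : ℝ :=
  sSup {r | ∃ x ∈ PhiTM F T M, ∃ y ∈ F x, r = ‖y‖}

/-- `K_C`: Lipschitz paths with constant `‖F‖ + C + 1` starting in `M`. -/
def KC {m : ℕ} (F : Euc m → Set (Euc m)) (T : ℝ) (hT : 0 ≤ T) (M : Set (Euc m))
    (C : ℝ) : Set C(Icc (0:ℝ) T, Euc m) :=
  {y | (∀ u v : Icc (0:ℝ) T, ‖y u - y v‖ ≤ (normF F T M + C + 1) * |(u : ℝ) - (v : ℝ)|) ∧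
    y ⟨0, Set.left_mem_Icc.mpr hT⟩ ∈ M}

/-- `S_{[0,T]}`: restrictions to `[0,T]` of solutions starting in `M`. -/
def SolRestrict {m : ℕ} (F : Euc m → Set (Euc m)) (T : ℝ) (M : Set (Euc m)) :
    Set C(Icc (0:ℝ) T, Euc m) :=
  {y | ∃ z : ℝ → Euc m, IsSolution F z ∧ z 0 ∈ M ∧ ∀ u : Icc (0:ℝ) T, y u = z u}

/-- A generalised stochastic approximation process relative to `F`. -/
def IsGSAP {m : ℕ} {Ω : Type*} [MeasurableSpace Ω] (μ : Measure Ω)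
    (F : Euc m → Set (Euc m)) (M : Set (Euc m)) (γ : ℕ → ℝ)
    (Fn : ℕ → Euc m → Set (Euc m)) (U : ℕ → Ω → Euc m) (x : ℕ → Ω → Euc m) : Prop :=
  (∀ n, 0 < γ n) ∧
  Tendsto (fun n => ∑ i ∈ Finset.range n, γ (i + 1)) atTop atTop ∧
  Tendsto γ atTop (𝓝 0) ∧
  (∃ C, ∀ n ω, ‖U n ω‖ ≤ C) ∧
  (∀ n ω, x (n + 1) ω - x n ω - γ (n + 1) • U (n + 1) ω ∈ γ (n + 1) • Fn n (x n ω)) ∧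
  (∀ T > 0, ∀ᵐ ω ∂μ, Tendsto
    (fun n => ⨆ k : {k : ℕ // ∑ i ∈ Finset.Ico n k, γ i ≤ T},
      ‖∑ i ∈ Finset.Ico n (k : ℕ), γ (i + 1) • U (i + 1) ω‖) atTop (𝓝 0)) ∧
  (∀ n ω, x n ω ∈ M) ∧
  (∀ δ > 0, ∃ n₀ : ℕ, ∀ n ≥ n₀, ∀ ω, Fn n (x n ω) ⊆ Fdelta F δ (x n ω))


lemma aux_closed_hit {m : ℕ} {F : Euc m → Set (Euc m)} (hF : IsStandardSVM F)
    {K : Set (Euc m)} (hK : IsCompact K) : IsClosed {x | (F x ∩ K).Nonempty} := by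
  apply IsSeqClosed.isClosed
  intro x a hx hxa
  choose y hy using hx
  obtain ⟨b, hb, φ, hφ, hlim⟩ := hK.tendsto_subseq (fun n => (hy n).2)
  refine ⟨b, ?_, hb⟩
  have h1 : Tendsto (fun n => (x (φ n), y (φ n))) atTop (𝓝 (a, b)) :=
    (hxa.comp hφ.tendsto_atTop).prodMk_nhds hlim
  exact hF.2.1.mem_of_tendsto h1 (Eventually.of_forall fun n => (hy (φ n)).1)

lemma aux_usc {m : ℕ} {F : Euc m → Set (Euc m)} (hF : IsStandardSVM F)
    {B : ℝ} (hB : ∀ x, ∀ y ∈ F x, ‖y‖ ≤ B) (x : Euc m) {η : ℝ} (hη : 0 < η) :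
    ∃ ρ > 0, ∀ x', dist x' x < ρ → F x' ⊆ Metric.thickening η (F x) := by
  have hK : IsCompact (closedBall (0 : Euc m) B \ Metric.thickening η (F x)) :=
    (isCompact_closedBall _ _).diff isOpen_thickening
  have hc := (aux_closed_hit hF hK).isOpen_compl
  have hx : x ∈ {x | (F x ∩ (closedBall (0 : Euc m) B \ Metric.thickening η (F x))).Nonempty}ᶜ →
      True := fun _ => trivial
  obtain ⟨ρ, hρ, hsub⟩ := Metric.isOpen_iff.1 hc x (by
    rintro ⟨y, hy1, hy2, hy3⟩
    exact hy3 (self_subset_thickening hη _ hy1))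
  refine ⟨ρ, hρ, fun x' hx' y hy => ?_⟩
  by_contra hcon
  exact hsub (mem_ball.2 hx') ⟨y, hy, by simpa using hB _ _ hy, hcon⟩

/-- measurable (minimal norm) selection -/
lemma aux_selection {m : ℕ} {F : Euc m → Set (Euc m)} (hF : IsStandardSVM F) :
    ∃ f : Euc m → Euc m, Measurable f ∧ ∀ x, f x ∈ F x := by
  have h1 : ∀ x, ∃ y ∈ F x, ∀ y' ∈ F x, ‖y‖ ≤ ‖y'‖ := fun x => by
    obtain ⟨y, hy, hmin⟩ := (hF.1 x).2.1.exists_isMinOn (hF.1 x).1 continuous_norm.continuousOn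
    exact ⟨y, hy, fun y' hy' => hmin hy'⟩
  choose f hf hmin using h1
  have huniq : ∀ x, ∀ y ∈ F x, ‖y‖ ≤ ‖f x‖ → y = f x := by
    intro x y hy hle
    by_contra hne
    have hmid : (1/2 : ℝ) • y + (1/2 : ℝ) • f x ∈ F x :=
      (hF.1 x).2.2 hy (hf x) (by norm_num) (by norm_num) (by norm_num)
    have h2 := hmin x _ hmid
    have h3 := norm_combo_lt_of_ne hle (le_refl ‖f x‖) hne (a := 1/2) (b := 1/2)
      (by norm_num) (by norm_num) (by norm_num)
    linarith
  refine ⟨f, ?_, hf⟩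
  apply measurable_of_isClosed
  intro K hK
  have : f ⁻¹' K = ⋂ q : ℚ, ({x | (F x ∩ (closedBall 0 (q:ℝ) ∩ K)).Nonempty} ∪
      {x | (F x ∩ closedBall 0 (q:ℝ)).Nonempty}ᶜ) := by
    ext x
    simp only [mem_preimage, mem_iInter, mem_union, mem_ofPred_eq, mem_compl_iff]
    constructor
    · intro hx q
      by_cases hq : ‖f x‖ ≤ q
      · left
        exact ⟨f x, hf x, by simpa using hq, hx⟩
      · right
        rintro ⟨y, hy, hy2⟩
        exact hq ((hmin x y hy).trans (by simpa using hy2))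
    · intro hx
      have h4 : ∀ n : ℕ, ∃ y ∈ F x, y ∈ K ∧ ‖y‖ ≤ ‖f x‖ + 1 / ((n:ℝ) + 1) := by
        intro n
        obtain ⟨q, hq1, hq2⟩ := exists_rat_btwn
          (lt_add_of_pos_right ‖f x‖ (Nat.one_div_pos_of_nat (α := ℝ) (n := n)))
        rcases hx q with ⟨y, hy, hy2, hy3⟩ | h
        · refine ⟨y, hy, hy3, ?_⟩
          have : ‖y‖ ≤ q := by simpa using hy2
          linarith
        · exact absurd ⟨f x, hf x, by simpa using hq1.le⟩ h
      choose y hy hyK hyn using h4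
      obtain ⟨b, hb, φ, hφ, hlim⟩ := (hF.1 x).2.1.tendsto_subseq hy
      have hbK : b ∈ K := hK.mem_of_tendsto hlim (Eventually.of_forall fun n => hyK _)
      have hlim2 : Tendsto (fun n : ℕ => ‖f x‖ + 1 / (((φ n : ℕ):ℝ) + 1)) atTop (𝓝 (‖f x‖ + 0)) :=
        tendsto_const_nhds.add
          ((tendsto_one_div_add_atTop_nhds_zero_nat (𝕜 := ℝ)).comp hφ.tendsto_atTop)
      have hbn : ‖b‖ ≤ ‖f x‖ + 0 :=
        le_of_tendsto_of_tendsto' hlim.norm hlim2 (fun n => hyn (φ n))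
      rw [← huniq x b hb (by simpa using hbn)]
      exact hbK
  rw [this]
  refine MeasurableSet.iInter fun q => ?_
  exact (aux_closed_hit hF ((isCompact_closedBall _ _).inter_right hK)).measurableSet.union
    (aux_closed_hit hF (isCompact_closedBall _ _)).measurableSet.compl

lemma aux_ftc {m : ℕ} {z : ℝ → Euc m} {K : NNReal} (hz : LipschitzWith K z) (a b : ℝ) :
    IntervalIntegrable (deriv z) volume a b ∧ ∫ u in a..b, deriv z u = z b - z a := by
  have hint : IntervalIntegrable (deriv z) volume a b := by
    refine (intervalIntegrable_const (c := (K:ℝ))).mono_fun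
      (stronglyMeasurable_deriv z).aestronglyMeasurable ?_
    refine Eventually.of_forall fun t => ?_
    simpa using norm_deriv_le_of_lipschitz hz
  refine ⟨hint, ?_⟩
  ext i
  let φ : Euc m →L[ℝ] ℝ := EuclideanSpace.proj i
  have h1 : φ (∫ u in a..b, deriv z u) = ∫ u in a..b, φ (deriv z u) :=
    (ContinuousLinearMap.intervalIntegral_comp_comm φ hint).symm
  have h2 : LipschitzWith (‖φ‖₊ * K) (fun t => φ (z t)) := φ.lipschitz.comp hz
  have h3 := (h2.lipschitzOnWith (s := uIcc a b)).absolutelyContinuousOnInterval.integral_deriv_eq_sub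
  have h4 : ∫ u in a..b, φ (deriv z u) = ∫ u in a..b, deriv (fun t => φ (z t)) u := by
    apply intervalIntegral.integral_congr_ae
    filter_upwards [hz.ae_differentiableAt_real] with u hu _
    exact (φ.hasFDerivAt.comp_hasDerivAt u hu.hasDerivAt).deriv.symm
  change φ (∫ u in a..b, deriv z u) = φ (z b - z a)
  rw [h1, h4, h3, map_sub]

/-- The closed enlargement of `F`. -/
def auxG {m : ℕ} (F : Euc m → Set (Euc m)) (ρ : ℝ) (x : Euc m) : Set (Euc m) :=
  {y | ∃ x', dist x' x ≤ ρ ∧ ∃ y' ∈ F x', dist y y' ≤ ρ}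

lemma aux_lip {m : ℕ} {w h : ℝ → Euc m} {L : ℝ}
    (hint : ∀ a b, IntervalIntegrable h volume a b)
    (hw : ∀ t, w t = w 0 + ∫ u in (0:ℝ)..t, h u)
    (hL : ∀ u, ‖h u‖ ≤ L) (a b : ℝ) :
    w b - w a = (∫ u in a..b, h u) ∧ dist (w b) (w a) ≤ L * |b - a| := by
  have : w b - w a = ∫ u in a..b, h u := by
    rw [hw b, hw a, ← intervalIntegral.integral_interval_sub_left (hint 0 b) (hint 0 a)]
    abel
  refine ⟨this, ?_⟩
  rw [dist_eq_norm, this]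
  exact intervalIntegral.norm_integral_le_of_norm_le_const fun u _ => hL u

lemma aux_closure {m : ℕ} {F : Euc m → Set (Euc m)} (hF : IsStandardSVM F)
    {B : ℝ} (hB : ∀ x, ∀ y ∈ F x, ‖y‖ ≤ B) {L : ℝ} (hL0 : 0 ≤ L)
    (w h : ℕ → ℝ → Euc m) (ρ : ℕ → ℝ)
    (hint : ∀ n a b, IntervalIntegrable (h n) volume a b)
    (hw : ∀ n t, w n t = w n 0 + ∫ u in (0:ℝ)..t, h n u)
    (hL : ∀ n u, ‖h n u‖ ≤ L)
    (hG : ∀ n u, h n u ∈ auxG F (ρ n) (w n u))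
    (U : Filter ℕ) [U.NeBot] (hρ : Tendsto ρ U (𝓝 0)) (z : ℝ → Euc m)
    (hz : ∀ t, Tendsto (fun n => w n t) U (𝓝 (z t))) : IsSolution F z := by
  have hlip : LipschitzWith (L.toNNReal) z := by
    refine LipschitzWith.of_dist_le_mul fun a b => ?_
    rw [Real.coe_toNNReal L hL0, Real.dist_eq]
    exact le_of_tendsto ((hz a).dist (hz b))
      (Eventually.of_forall fun n => (aux_lip (hint n) (hw n) (hL n) b a).2)
  refine ⟨hlip.continuous, deriv z, fun a b => (aux_ftc hlip a b).1, ?_, fun t => ?_⟩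
  swap
  · rw [(aux_ftc hlip 0 t).2]; abel
  filter_upwards [hlip.ae_differentiableAt_real] with t ht
  have key : ∀ η > 0, deriv z t ∈ cthickening (2 * η) (F (z t)) := by
    intro η hη
    obtain ⟨ρ0, hρ0, husc⟩ := aux_usc hF hB (z t) hη
    refine isClosed_cthickening.mem_of_tendsto ht.hasDerivAt.tendsto_slope_zero_right ?_
    have hs1 : ∀ᶠ s : ℝ in 𝓝[>] 0, s < ρ0 / (3 * (L + 1)) :=
      nhdsWithin_le_nhds (Iio_mem_nhds (by positivity))
    filter_upwards [hs1, self_mem_nhdsWithin] with s hs hs0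
    have hs0 : 0 < s := hs0
    rw [lt_div_iff₀ (by positivity)] at hs
    have hLs : L * s < ρ0 / 3 := by nlinarith
    refine isClosed_cthickening.mem_of_tendsto (((hz (t+s)).sub (hz t)).const_smul s⁻¹) ?_
    have e1 : ∀ᶠ n in U, ρ n < ρ0 / 3 := hρ.eventually (Iio_mem_nhds (by positivity))
    have e2 : ∀ᶠ n in U, ρ n < η := hρ.eventually (Iio_mem_nhds hη)
    have e3 : ∀ᶠ n in U, dist (w n t) (z t) < ρ0 / 3 :=
      (hz t).eventually (Metric.ball_mem_nhds _ (by positivity))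
    filter_upwards [e1, e2, e3] with n h1 h2 h3
    have hmem : ∀ u ∈ Ioc t (t+s), h n u ∈ cthickening (2 * η) (F (z t)) := by
      intro u hu
      obtain ⟨x', hx', y', hy', hyy⟩ := hG n u
      have d1 : dist (w n u) (w n t) < ρ0 / 3 := by
        refine lt_of_le_of_lt (aux_lip (hint n) (hw n) (hL n) t u).2 (lt_of_le_of_lt ?_ hLs)
        rw [abs_of_nonneg (by linarith [hu.1])]
        exact mul_le_mul_of_nonneg_left (by linarith [hu.2]) hL0
      have d2 : dist x' (z t) < ρ0 := by
        linarith [dist_triangle4 x' (w n u) (w n t) (z t)]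
      obtain ⟨v, hv, hv2⟩ := mem_thickening_iff.1 (husc x' d2 hy')
      refine mem_cthickening_of_dist_le _ v _ _ hv ?_
      linarith [dist_triangle (h n u) y' v]
    have hav := (((hF.1 (z t)).2.2).cthickening (2 * η)).set_average_mem (μ := volume)
      (t := Ioc t (t+s)) (f := h n) isClosed_cthickening (by simp [hs0]) (by simp)
      ((ae_restrict_iff' measurableSet_Ioc).2 (Eventually.of_forall hmem))
      ((intervalIntegrable_iff_integrableOn_Ioc_of_le (by linarith)).1 (hint n t (t+s)))
    rw [setAverage_eq, ← intervalIntegral.integral_of_le (by linarith),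
      ← (aux_lip (hint n) (hw n) (hL n) t (t+s)).1] at hav
    simpa [measureReal_def, hs0.le] using hav
  have hcl : IsClosed (F (z t)) := (hF.1 (z t)).2.1.isClosed
  rw [← hcl.closure_eq, closure_eq_iInter_cthickening]
  simp only [mem_iInter]
  intro η hη
  have := key (η / 2) (by positivity)
  rwa [mul_div_cancel₀ _ (by norm_num : (2:ℝ) ≠ 0)] at this

lemma aux_bdd_int {m : ℕ} {h : ℝ → Euc m} {L : ℝ} (hm : AEStronglyMeasurable h volume)
    (hL : ∀ u, ‖h u‖ ≤ L) (a b : ℝ) : IntervalIntegrable h volume a b := by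
  refine (intervalIntegrable_const (c := L)).mono_fun hm.restrict ?_
  exact Eventually.of_forall fun t => (hL t).trans (le_abs_self L)

lemma aux_euler {m : ℕ} {F : Euc m → Set (Euc m)} {f : Euc m → Euc m} (hf : ∀ x, f x ∈ F x)
    {B : ℝ} (hB : ∀ x, ‖f x‖ ≤ B) (hB0 : 0 ≤ B) (x0 : Euc m) {τ : ℝ} (hτ : 0 < τ)
    {ρ : ℝ} (hρ : B * τ ≤ ρ) :
    ∃ h : ℝ → Euc m, Measurable h ∧ (∀ u, ‖h u‖ ≤ B) ∧
      ∀ t, 0 ≤ t → h t ∈ auxG F ρ (x0 + ∫ u in (0:ℝ)..t, h u) := by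
  let p : ℕ → Euc m := fun n => Nat.rec x0 (fun _ x => x + τ • f x) n
  let h : ℝ → Euc m := fun t => f (p ⌊t / τ⌋₊)
  have hmeas : Measurable h := by
    have h1 : Measurable (fun n : ℕ => f (p n)) := measurable_from_nat
    exact h1.comp (Nat.measurable_floor.comp (measurable_id.div_const τ))
  have hbd : ∀ u, ‖h u‖ ≤ B := fun u => hB _
  have hint := aux_bdd_int hmeas.aestronglyMeasurable hbd
  have hp : ∀ n : ℕ, p n = x0 + ∫ u in (0:ℝ)..(n * τ), h u := by
    intro n
    induction n with
    | zero => simp [p]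
    | succ n ih =>
      have e1 : p (n+1) = p n + τ • f (p n) := rfl
      rw [← intervalIntegral.integral_add_adjacent_intervals (hint 0 (n * τ)) (hint _ _),
        ← add_assoc, ← ih, e1]
      congr 1
      have hle : (n:ℝ) * τ ≤ ((n+1:ℕ):ℝ) * τ := by push_cast; nlinarith
      rw [intervalIntegral.integral_congr_Ioo_of_le (g := fun _ => f (p n)) hle]
      · rw [intervalIntegral.integral_const]
        congr 1
        push_cast; ring
      · intro u hu
        have : ⌊u / τ⌋₊ = n := by
          rw [Nat.floor_eq_iff]
          · refine ⟨(le_div_iff₀ hτ).2 hu.1.le, (div_lt_iff₀ hτ).2 ?_⟩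
            have := hu.2
            push_cast at this
            exact this
          · have : 0 ≤ (n:ℝ) * τ := by positivity
            exact div_nonneg (this.trans hu.1.le) hτ.le
        simp only [h, this]
  refine ⟨h, hmeas, hbd, fun t ht => ⟨p ⌊t / τ⌋₊, ?_, h t, hf _, ?_⟩⟩
  · rw [hp, dist_eq_norm, add_sub_add_left_eq_sub, intervalIntegral.integral_interval_sub_left (hint _ _) (hint _ _)]
    refine (intervalIntegral.norm_integral_le_of_norm_le_const fun u _ => hbd u).trans ?_
    refine le_trans (mul_le_mul_of_nonneg_left ?_ hB0) hρ
    have h1 := Nat.floor_le (div_nonneg ht hτ.le)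
    have h2 := Nat.lt_floor_add_one (t / τ)
    rw [le_div_iff₀ hτ] at h1
    rw [div_lt_iff₀ hτ] at h2
    rw [abs_le]
    constructor <;> nlinarith
  · rw [dist_self]
    exact le_trans (by positivity) hρ

lemma aux_glue {m : ℕ} {F : Euc m → Set (Euc m)} {f : Euc m → Euc m} (hf : ∀ x, f x ∈ F x)
    {B : ℝ} (hB : ∀ x, ‖f x‖ ≤ B) (hB0 : 0 ≤ B) (x0 : Euc m) {ρ L T : ℝ} (hρ : 0 < ρ)
    (hBL : B ≤ L) (hT : 0 < T) (g : ℝ → Euc m) (hg : IntervalIntegrable g volume 0 T)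
    (hgL : ∀ u ∈ Icc 0 T, ‖g u‖ ≤ L)
    (hgG : ∀ u ∈ Icc 0 T, g u ∈ auxG F ρ (x0 + ∫ v in (0:ℝ)..u, g v)) :
    ∃ H : ℝ → Euc m, (∀ a b, IntervalIntegrable H volume a b) ∧ (∀ u, ‖H u‖ ≤ L) ∧
      (∀ u, H u ∈ auxG F ρ (x0 + ∫ v in (0:ℝ)..u, H v)) ∧
      ∀ u ∈ Icc 0 T, (∫ v in (0:ℝ)..u, H v) = ∫ v in (0:ℝ)..u, g v := by
  have hτ : 0 < ρ / (B + 1) := by positivity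
  have hBτ : B * (ρ / (B + 1)) ≤ ρ := by
    rw [mul_div_assoc', div_le_iff₀ (by positivity)]; nlinarith
  obtain ⟨hp, hpm, hpb, hpG⟩ := aux_euler hf hB hB0 (x0 + ∫ v in (0:ℝ)..T, g v) hτ hBτ
  obtain ⟨hn, hnm, hnb, hnG⟩ := aux_euler (F := fun x => -F x) (f := fun x => - f x)
    (fun x => by simpa using hf x) (fun x => by simpa using hB x) hB0 x0 hτ hBτ
  let H : ℝ → Euc m := (Iio (0:ℝ)).piecewise (fun u => - hn (-u))
    ((Iic T).piecewise ((Icc 0 T).indicator g) (fun u => hp (u - T)))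
  have Hneg : ∀ u < 0, H u = - hn (-u) := fun u hu => by
    simp [H, hu]
  have Hmid : ∀ u ∈ Icc 0 T, H u = g u := fun u hu => by
    simp [H, not_lt.2 hu.1, hu.1, hu.2]
  have Hpos : ∀ u, T < u → H u = hp (u - T) := fun u hu => by
    simp [H, not_lt.2 (hT.le.trans hu.le), hu]
  have HL : ∀ u, ‖H u‖ ≤ L := by
    intro u
    rcases lt_or_ge u 0 with h | h
    · rw [Hneg u h, norm_neg]; exact (hnb _).trans hBL
    rcases le_or_gt u T with h' | h'
    · rw [Hmid u ⟨h, h'⟩]; exact hgL u ⟨h, h'⟩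
    · rw [Hpos u h']; exact (hpb _).trans hBL
  have Hm : AEStronglyMeasurable H volume := by
    have m1 : AEStronglyMeasurable (fun u : ℝ => - hn (-u)) volume :=
      (hnm.comp measurable_neg).neg.aestronglyMeasurable
    have m2 : AEStronglyMeasurable (fun u : ℝ => hp (u - T)) volume :=
      (hpm.comp (measurable_id.sub_const T)).aestronglyMeasurable
    have m3 : AEStronglyMeasurable ((Icc 0 T).indicator g) volume :=
      (((intervalIntegrable_iff_integrableOn_Icc_of_le hT.le).1 hg).integrable_indicator
        measurableSet_Icc).aestronglyMeasurable
    exact AEStronglyMeasurable.piecewise measurableSet_Iio m1.restrict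
      (AEStronglyMeasurable.piecewise measurableSet_Iic m3.restrict m2.restrict).restrict
  have Hint := aux_bdd_int Hm HL
  have hmid : ∀ u ∈ Icc 0 T, (∫ v in (0:ℝ)..u, H v) = ∫ v in (0:ℝ)..u, g v := by
    intro u hu
    refine intervalIntegral.integral_congr_Ioo_of_le hu.1 fun v hv => ?_
    exact Hmid v ⟨hv.1.le, hv.2.le.trans hu.2⟩
  refine ⟨H, Hint, HL, ?_, hmid⟩
  intro u
  rcases lt_or_ge u 0 with h | h
  · have e : (∫ v in (0:ℝ)..u, H v) = ∫ v in (0:ℝ)..(-u), hn v := by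
      rw [intervalIntegral.integral_symm,
        intervalIntegral.integral_congr_Ioo_of_le (g := fun v => - hn (-v)) h.le
          (fun v hv => Hneg v hv.2), intervalIntegral.integral_neg, neg_neg,
        intervalIntegral.integral_comp_neg (fun v => hn v), neg_zero]
    obtain ⟨x', hx', y', hy', hyy⟩ := hnG (-u) (by linarith)
    rw [e, Hneg u h]
    exact ⟨x', hx', -y', by simpa using hy', by simpa using hyy⟩
  rcases le_or_gt u T with h' | h'
  · rw [Hmid u ⟨h, h'⟩, hmid u ⟨h, h'⟩]; exact hgG u ⟨h, h'⟩
  · have e : (∫ v in (0:ℝ)..u, H v) = (∫ v in (0:ℝ)..T, g v) + ∫ v in (0:ℝ)..(u-T), hp v := by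
      rw [← intervalIntegral.integral_add_adjacent_intervals (Hint 0 T) (Hint T u),
        hmid T ⟨hT.le, le_rfl⟩]
      congr 1
      rw [intervalIntegral.integral_congr_Ioo_of_le (g := fun v => hp (v - T)) h'.le
          (fun v hv => Hpos v hv.1), intervalIntegral.integral_comp_sub_right (fun v => hp v),
          sub_self]
    rw [e, Hpos u h', ← add_assoc]
    exact hpG (u - T) (by linarith)

lemma aux_Lambda_nonempty {m : ℕ} {F : Euc m → Set (Euc m)} (hF : IsStandardSVM F)
    {B : ℝ} (hB : ∀ x, ∀ y ∈ F x, ‖y‖ ≤ B) {T : ℝ} (hT : 0 ≤ T) {δ : ℝ} (hδ : 0 ≤ δ)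
    (z : C(Icc (0:ℝ) T, Euc m)) : (LambdaD F T hT δ z).Nonempty := by
  obtain ⟨f, hfm, hf⟩ := aux_selection hF
  let h : ℝ → Euc m := fun t => f (z (projIcc 0 T hT t))
  have hm : Measurable h := hfm.comp (z.continuous.comp continuous_projIcc).measurable
  have hint := aux_bdd_int hm.aestronglyMeasurable (fun u => hB _ _ (hf _))
  have hc : Continuous fun t => ∫ u in (0:ℝ)..t, h u :=
    intervalIntegral.continuous_primitive hint 0
  refine ⟨⟨fun τ => z ⟨0, Set.left_mem_Icc.mpr hT⟩ + ∫ u in (0:ℝ)..(τ:ℝ), h u,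
    continuous_const.add (hc.comp continuous_subtype_val)⟩, h, hint 0 T, fun u => ?_, fun τ => rfl⟩
  have hu : h u ∈ F (z u) := by
    have : h u = f (z u) := by simp [h, projIcc_val]
    rw [this]; exact hf _
  unfold Fdelta
  split_ifs with h0
  · exact hu
  · have hpos : 0 < δ := lt_of_le_of_ne hδ (Ne.symm h0)
    exact ⟨z u, by simpa using hpos, by rw [infDist_zero_of_mem hu]; exact hpos⟩

lemma aux_Fdelta_sub {m : ℕ} {F : Euc m → Set (Euc m)} (hF : IsStandardSVM F) {δ : ℝ}
    (hδ : 0 ≤ δ) (x : Euc m) : Fdelta F δ x ⊆ auxG F δ x := by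
  intro y hy
  unfold Fdelta at hy
  split_ifs at hy with h0
  · exact ⟨x, by simpa using hδ, y, hy, by simpa using hδ⟩
  · obtain ⟨x', hx', hd⟩ := hy
    obtain ⟨y', hy', hd'⟩ := (infDist_lt_iff (hF.1 x').1).1 hd
    exact ⟨x', hx'.le, y', hy', hd'.le⟩
/-- (Lemma `distFix`.) For a bounded standard `F`, `T, C > 0` and the
compact set `K_C` of Lipschitz paths starting in the compact set `M`: for every `α > 0`
there are `ε > 0` and `δ₀ > 0` such that for every `0 ≤ δ < δ₀` and every `z ∈ K_C`,
`d_{[0,T]}(z, Λ^δ(z)) < ε` implies `d_{[0,T]}(z, S_{[0,T]}) < α`. -/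
theorem dist_to_solutions_of_dist_to_LambdaD
    {m : ℕ} (M : Set (Euc m)) (hM : IsCompact M)
    (F : Euc m → Set (Euc m)) (hF : IsStandardSVM F)
    (hFbdd : ∃ B : ℝ, ∀ x, ∀ y ∈ F x, ‖y‖ ≤ B)
    (T : ℝ) (hT : 0 < T) (C : ℝ) (hC : 0 < C) :
    ∀ α > 0, ∃ ε > 0, ∃ δ₀ > 0, ∀ δ : ℝ, 0 ≤ δ → δ < δ₀ →
      ∀ z ∈ KC F T hT.le M C,
        Metric.infDist z (LambdaD F T hT.le δ z) < ε →
        Metric.infDist z (SolRestrict F T M) < α := by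
  obtain ⟨B₀, hB₀⟩ := hFbdd
  obtain ⟨B, hB0, hB⟩ : ∃ B : ℝ, 0 ≤ B ∧ ∀ x, ∀ y ∈ F x, ‖y‖ ≤ B :=
    ⟨|B₀|, abs_nonneg _, fun x y hy => (hB₀ x y hy).trans (le_abs_self _)⟩
  obtain ⟨f, -, hf⟩ := aux_selection hF
  intro α hα
  by_contra hcon
  push Not at hcon
  have hpos : ∀ n : ℕ, (0:ℝ) < 1 / ((n:ℝ) + 1) := fun n => Nat.one_div_pos_of_nat
  have hle1 : ∀ n : ℕ, 1 / ((n:ℝ) + 1) ≤ 1 := fun n => by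
    rw [div_le_one (by positivity)]; linarith [Nat.cast_nonneg (α := ℝ) n]
  choose δ hδ0 hδ1 z hzK hzL hzS using fun n : ℕ => hcon _ (hpos n) _ (hpos n)
  choose y hyΛ hyd using fun n => (infDist_lt_iff (aux_Lambda_nonempty hF hB hT.le (hδ0 n) (z n))).1 (hzL n)
  choose g hgi hgF hgy using hyΛ
  let x0 : ℕ → Euc m := fun n => z n ⟨0, Set.left_mem_Icc.mpr hT.le⟩
  have hx0 : ∀ n, x0 n ∈ M := fun n => (hzK n).2
  have hG0 : ∀ n : ℕ, ∀ u ∈ Icc 0 T, g n u ∈ auxG F (2 * (1 / ((n:ℝ) + 1)))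
      (x0 n + ∫ v in (0:ℝ)..u, g n v) ∧ ‖g n u‖ ≤ B + 1 := by
    intro n u hu
    obtain ⟨x', hx', y', hy', hyy⟩ := aux_Fdelta_sub hF (hδ0 n) _ (hgF n ⟨u, hu⟩)
    have e : y n ⟨u, hu⟩ = x0 n + ∫ v in (0:ℝ)..u, g n v := hgy n ⟨u, hu⟩
    have d1 : dist (z n ⟨u, hu⟩) (y n ⟨u, hu⟩) ≤ dist (z n) (y n) :=
      ContinuousMap.dist_apply_le_dist _
    refine ⟨⟨x', ?_, y', hy', ?_⟩, ?_⟩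
    · rw [← e]
      linarith [dist_triangle x' (z n ⟨u, hu⟩) (y n ⟨u, hu⟩), hyd n, hδ1 n]
    · have := hpos n
      linarith [hδ1 n]
    · have h1 := hB _ _ hy'
      have h2 : dist (g n u) y' ≤ 1 := hyy.trans ((hδ1 n).le.trans (hle1 n))
      rw [dist_eq_norm] at h2
      linarith [norm_le_insert' (g n u) y']
  choose H Hint HL HG Hmid using fun n : ℕ => aux_glue hf (fun x => hB x _ (hf x)) hB0 (x0 n)
    (by have := hpos n; positivity : 0 < 2 * (1 / ((n:ℝ) + 1))) (by linarith : B ≤ B + 1) hT (g n)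
    (hgi n) (fun u hu => (hG0 n u hu).2) (fun u hu => (hG0 n u hu).1)
  let w : ℕ → ℝ → Euc m := fun n t => x0 n + ∫ v in (0:ℝ)..t, H n v
  have hw0 : ∀ n, w n 0 = x0 n := fun n => by simp [w]
  have hw : ∀ n t, w n t = w n 0 + ∫ v in (0:ℝ)..t, H n v := fun n t => by rw [hw0]
  have hwlip := fun n => aux_lip (Hint n) (hw n) (HL n)
  obtain ⟨R, hR⟩ := hM.isBounded.subset_closedBall (0 : Euc m)
  let U : Ultrafilter ℕ := Filter.hyperfilter ℕ
  have hU : (U : Filter ℕ) ≤ atTop := Nat.hyperfilter_le_atTop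
  have hlim : ∀ t, ∃ a, Tendsto (fun n => w n t) U (𝓝 a) := by
    intro t
    have hc := isCompact_closedBall (0 : Euc m) (R + (B+1) * |t|)
    obtain ⟨a, -, ha⟩ := hc.ultrafilter_le_nhds (U.map fun n => w n t) (by
      rw [Ultrafilter.coe_map, le_principal_iff]
      refine Filter.mem_map.2 (Filter.Eventually.of_forall (f := (U : Filter ℕ)) fun n => ?_)
      have h1 := (hwlip n 0 t).2
      have h2 := hR (hx0 n)
      rw [hw0, sub_zero] at h1
      rw [mem_closedBall] at h2
      exact mem_closedBall.2 (by linarith [dist_triangle (w n t) (x0 n) 0]))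
    exact ⟨a, ha⟩
  choose ζ hζ using hlim
  have h1n : Tendsto (fun n : ℕ => 1 / ((n:ℝ) + 1)) U (𝓝 0) :=
    (tendsto_one_div_add_atTop_nhds_zero_nat (𝕜 := ℝ)).mono_left hU
  have hsol : IsSolution F ζ := aux_closure hF hB (by linarith : 0 ≤ B + 1) w H _ Hint hw HL HG
    U (by simpa using h1n.const_mul 2) ζ hζ
  have hζ0 : ζ 0 ∈ M := hM.isClosed.mem_of_tendsto (hζ 0)
    (Filter.Eventually.of_forall fun n => by rw [hw0]; exact hx0 n)
  let Z : C(Icc (0:ℝ) T, Euc m) := ⟨fun u => ζ u, hsol.1.comp continuous_subtype_val⟩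
  have hZ : Z ∈ SolRestrict F T M := ⟨ζ, hsol, hζ0, fun u => rfl⟩
  have hwy : ∀ n (u : Icc (0:ℝ) T), y n u = w n u := fun n u => by
    rw [hgy n u]; simp only [w, x0]; rw [Hmid n u u.2]
  have heq : Equicontinuous (fun n (u : Icc (0:ℝ) T) => w n u) := by
    apply UniformEquicontinuous.equicontinuous
    refine LipschitzWith.uniformEquicontinuous _ (B+1).toNNReal fun n => ?_
    refine LipschitzWith.of_dist_le_mul fun a b => ?_
    rw [Real.coe_toNNReal _ (by linarith)]
    exact (hwlip n b a).2
  have hunif := (heq.tendsto_uniformFun_iff_pi U (fun u : Icc (0:ℝ) T => ζ u)).2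
    (tendsto_pi_nhds.2 fun u => hζ u)
  rw [UniformFun.tendsto_iff_tendstoUniformly, Metric.tendstoUniformly_iff] at hunif
  have e1 := hunif (α / 3) (by positivity)
  have e2 : ∀ᶠ n : ℕ in U, 1 / ((n:ℝ) + 1) < α / 3 := h1n.eventually (Iio_mem_nhds (by positivity))
  obtain ⟨n, hn1, hn2⟩ := (e1.and e2).exists
  have d1 : dist (y n) Z ≤ α / 3 := by
    rw [ContinuousMap.dist_le (by positivity)]
    intro u
    rw [hwy n u, dist_comm]
    exact (hn1 u).le
  have d2 := infDist_le_dist_of_mem (x := z n) hZ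
  have d3 := hzS n
  linarith [dist_triangle (z n) (y n) Z, hyd n]
end
end

section
/- Let (x_n) be a generalised stochastic approximation process relative to a standard set-valued map F, with values in a compact set M ⊂ ℝ^m, whose noise (U_n) satisfies condition (bruit2). Let X be the continuous-time affine interpolation of (x_n), L(X) = ⋂_{t≥0} closure{X(s) : s ≥ t} its limit set and Att(X) the set of attainable points. If A is an attractor for the set-valued dynamical system Φ induced by F, with basin of attraction B(A), and Att(X) ∩ B(A) ≠ ∅, then P(L(X) ⊂ A) > 0. -/
open MeasureTheory Filter Topology Metric Set Pointwise

noncomputable section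

section helpers

variable {m : ℕ}

/-- locally Lipschitz curve with derivative in `F` is a solution. -/
lemma isSolution_of_lip {F : Euc m → Set (Euc m)} {z : ℝ → Euc m}
    (hz : ∀ R : ℝ, ∃ L : ℝ, ∀ s ∈ Icc (-R) R, ∀ t ∈ Icc (-R) R, ‖z t - z s‖ ≤ L * |t - s|)
    (hd : ∀ᵐ s : ℝ, DifferentiableAt ℝ z s → deriv z s ∈ F (z s)) : IsSolution F z := by
  have hlip : ∀ R : ℝ, ∃ L : NNReal, LipschitzOnWith L z (Icc (-R) R) := by
    intro R
    obtain ⟨L, hL⟩ := hz R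
    refine ⟨L.toNNReal, LipschitzOnWith.of_dist_le_mul fun s hs t ht => ?_⟩
    rw [dist_eq_norm, dist_eq_norm, Real.norm_eq_abs]
    refine (hL t ht s hs).trans ?_
    gcongr
    exact Real.le_coe_toNNReal L
  have hsub : ∀ a b : ℝ, ∃ R : ℝ, uIcc a b ⊆ Ioo (-R) R := by
    intro a b
    refine ⟨max |a| |b| + 1, fun t ht => ?_⟩
    rw [mem_uIcc] at ht
    have h1 := le_max_left |a| |b|
    have h2 := le_max_right |a| |b|
    have := abs_le.1 (le_refl |a|)
    have := abs_le.1 (le_refl |b|)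
    constructor <;> rcases ht with h | h <;> linarith [h.1, h.2]
  have hcont : Continuous z := by
    rw [continuous_iff_continuousAt]
    intro t
    obtain ⟨R, hR⟩ := hsub t t
    obtain ⟨L, hL⟩ := hlip R
    refine hL.continuousOn.continuousAt ?_
    exact Icc_mem_nhds (hR (by simp)).1 (hR (by simp)).2
  have hbv : LocallyBoundedVariationOn z univ := by
    intro a b _ _
    obtain ⟨R, hR⟩ := hsub a b
    obtain ⟨L, hL⟩ := hlip R
    have h : Icc a b ⊆ Icc (-R) R :=
      Icc_subset_uIcc.trans (hR.trans Ioo_subset_Icc_self)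
    by_cases hab : a ≤ b
    · have := (hL.mono h).locallyBoundedVariationOn a b (left_mem_Icc.2 hab) (right_mem_Icc.2 hab)
      simpa using this
    · rw [Icc_eq_empty hab]
      simp [BoundedVariationOn]
  have hdiff := hbv.ae_differentiableAt
  have hint : ∀ a b : ℝ, IntervalIntegrable (deriv z) volume a b := by
    intro a b
    obtain ⟨R, hR⟩ := hsub a b
    obtain ⟨L, hL⟩ := hlip R
    have : IntervalIntegrable (fun _ : ℝ => (L : ℝ)) volume a b := intervalIntegrable_const
    refine this.mono_fun (measurable_deriv z).aestronglyMeasurable ?_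
    rw [Filter.EventuallyLE, ae_restrict_iff' measurableSet_uIoc]
    refine ae_of_all _ fun t ht => ?_
    have ht' := hR (uIoc_subset_uIcc ht)
    rw [Real.norm_of_nonneg L.coe_nonneg]
    exact norm_deriv_le_of_lipschitzOn (Icc_mem_nhds ht'.1 ht'.2) hL
  refine ⟨hcont, deriv z, hint, ?_, ?_⟩
  · filter_upwards [hd, hdiff] with s h1 h2 using h1 h2
  · intro t
    obtain ⟨R, hR⟩ := hsub 0 t
    obtain ⟨L, hL⟩ := hlip R
    have hL' := hL.mono (hR.trans Ioo_subset_Icc_self)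
    ext i
    have hp : LipschitzOnWith L (fun s => z s i) (uIcc 0 t) := by
      refine LipschitzOnWith.of_dist_le_mul fun s hs u hu => ?_
      refine le_trans ?_ (hL'.dist_le_mul s hs u hu)
      rw [dist_eq_norm, dist_eq_norm]
      exact PiLp.norm_apply_le (z s - z u) i
    have h1 := hp.absolutelyContinuousOnInterval.integral_deriv_eq_sub
    have h2 := (EuclideanSpace.proj (𝕜 := ℝ) i : Euc m →L[ℝ] ℝ).intervalIntegral_comp_comm (hint 0 t)
    have h3 : ∫ s in (0:ℝ)..t, deriv (fun s => z s i) s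
        = ∫ s in (0:ℝ)..t, (EuclideanSpace.proj (𝕜 := ℝ) i : Euc m →L[ℝ] ℝ) (deriv z s) := by
      refine intervalIntegral.integral_congr_ae ?_
      filter_upwards [hdiff] with s hs _
      exact (((EuclideanSpace.proj (𝕜 := ℝ) i : Euc m →L[ℝ] ℝ).hasFDerivAt).comp_hasDerivAt s
        hs.hasDerivAt).deriv
    rw [h3, h2] at h1
    simp only [PiLp.add_apply]
    have h4 : (∫ u in (0:ℝ)..t, deriv z u) i = z t i - z 0 i := h1
    rw [h4]; ring

/-- forward solution -/
def FwdSol (F : Euc m → Set (Euc m)) (z : ℝ → Euc m) : Prop :=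
  (∀ R : ℝ, ∃ L : ℝ, 0 ≤ L ∧ ∀ s ∈ Icc 0 R, ∀ t ∈ Icc 0 R, ‖z t - z s‖ ≤ L * |t - s|) ∧
  ∀ s : ℝ, 0 ≤ s → ∀ (φ : StrongDual ℝ (Euc m)) (κ : ℝ), (∀ f ∈ F (z s), φ f < κ) →
    ∃ r > 0, ∀ t, s < t → t < s + r → φ (z t - z s) ≤ κ * (t - s)

lemma FwdSol.deriv_mem {F : Euc m → Set (Euc m)} {z : ℝ → Euc m} (hz : FwdSol F z)
    (hcl : ∀ x, IsClosed (F x)) (hco : ∀ x, Convex ℝ (F x)) {s : ℝ} (hs : 0 ≤ s) {d : Euc m}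
    (hd : HasDerivAt z d s) : d ∈ F (z s) := by
  by_contra hmem
  obtain ⟨φ, κ, h1, h2⟩ := geometric_hahn_banach_closed_point (hco (z s)) (hcl (z s)) hmem
  obtain ⟨r, hr, h3⟩ := hz.2 s hs φ κ h1
  have h4 : HasDerivAt (fun t => φ (z t)) (φ d) s := φ.hasFDerivAt.comp_hasDerivAt s hd
  have h5 := (hasDerivAt_iff_tendsto_slope.1 h4).mono_left
    (nhdsWithin_mono s (fun t (ht : s < t) => ne_of_gt ht) : 𝓝[>] s ≤ 𝓝[≠] s)
  have h6 : ∀ᶠ t in 𝓝[>] s, slope (fun t => φ (z t)) s t ≤ κ := by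
    filter_upwards [Ioo_mem_nhdsGT (show s < s + r by linarith)] with t ht
    have := h3 t ht.1 ht.2
    rw [slope_def_field, div_le_iff₀ (by linarith [ht.1]), ← map_sub]
    exact this
  exact absurd (le_of_tendsto h5 h6) (not_le.2 h2)

lemma glue {F : Euc m → Set (Euc m)} (hcl : ∀ x, IsClosed (F x)) (hco : ∀ x, Convex ℝ (F x))
    {z w : ℝ → Euc m} (hz : FwdSol F z) (hw : FwdSol (fun x => -F x) w) (h0 : z 0 = w 0) :
    ∃ y, IsSolution F y ∧ ∀ t, 0 ≤ t → y t = z t := by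
  set y : ℝ → Euc m := fun t => if 0 ≤ t then z t else w (-t) with hy
  have hyp : ∀ t, 0 ≤ t → y t = z t := fun t ht => by simp [hy, ht]
  have hyn : ∀ t, t ≤ 0 → y t = w (-t) := fun t ht => by
    rcases ht.lt_or_eq with h | h
    · simp [hy, not_le.2 h]
    · simp [hy, h, h0]
  refine ⟨y, isSolution_of_lip ?_ ?_, hyp⟩
  · intro R
    obtain ⟨L1, hL1, h1⟩ := hz.1 R
    obtain ⟨L2, hL2, h2⟩ := hw.1 R
    have key : ∀ s ∈ Icc (-R) R, ∀ t ∈ Icc (-R) R, s ≤ t → ‖y t - y s‖ ≤ (L1 + L2) * (t - s) := by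
      intro s hs t ht hst
      rcases le_total 0 s with h | h
      · rw [hyp s h, hyp t (h.trans hst)]
        refine (h1 s ⟨h, hs.2⟩ t ⟨h.trans hst, ht.2⟩).trans ?_
        rw [abs_of_nonneg (by linarith)]
        nlinarith
      rcases le_total 0 t with h' | h'
      · have hR : 0 ≤ R := by linarith [ht.2]
        rw [hyp t h', hyn s h]
        have e1 := h1 0 ⟨le_rfl, hR⟩ t ⟨h', ht.2⟩
        have e2 := h2 (-s) ⟨by linarith, by linarith [hs.1]⟩ 0 ⟨le_rfl, hR⟩
        have : z t - w (-s) = (z t - z 0) + (w 0 - w (-s)) := by rw [h0]; abel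
        rw [this]
        refine (norm_add_le _ _).trans ((add_le_add e1 e2).trans ?_)
        rw [abs_of_nonneg (by linarith), abs_of_nonpos (by linarith)]
        nlinarith
      · rw [hyn t h', hyn s h]
        refine (h2 (-s) ⟨by linarith, by linarith [hs.1]⟩ (-t)
          ⟨by linarith, by linarith [ht.1]⟩).trans ?_
        rw [abs_of_nonpos (by linarith)]
        nlinarith
    refine ⟨L1 + L2, fun s hs t ht => ?_⟩
    rcases le_total s t with h | h
    · rw [abs_of_nonneg (by linarith)]; exact key s hs t ht h
    · rw [abs_of_nonpos (by linarith), norm_sub_rev]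
      refine (key t ht s hs h).trans (le_of_eq (by ring))
  · have : ∀ᵐ s : ℝ, s ≠ 0 := by simp [ae_iff]
    filter_upwards [this] with s hs hd
    rcases lt_or_gt_of_ne hs with h | h
    · have e : w =ᶠ[𝓝 (-s)] fun t => y (-t) := by
        filter_upwards [lt_mem_nhds (show 0 < -s by linarith)] with t ht
        rw [hyn (-t) (by linarith)]; simp
      have h1 : HasDerivAt (fun t => y (-t)) (-deriv y s) (-s) := by
        have := hd.hasDerivAt
        have h2 : HasDerivAt y (deriv y s) (-(-s)) := by rwa [neg_neg]
        have h3 := h2.scomp (-s) (hasDerivAt_neg (-s))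
        simpa [Function.comp_def] using h3
      have h3 := hw.deriv_mem (fun x => (hcl x).neg) (fun x => (hco x).neg)
        (show 0 ≤ -s by linarith) (h1.congr_of_eventuallyEq e)
      rw [hyn s h.le]
      simpa using h3
    · have e : z =ᶠ[𝓝 s] y := by
        filter_upwards [lt_mem_nhds h] with t ht
        rw [hyp t ht.le]
      rw [hyp s h.le]
      exact hz.deriv_mem hcl hco h.le (hd.hasDerivAt.congr_of_eventuallyEq e)

lemma exists_ultra_lim {y : ℕ → Euc m} {B : ℝ} (hy : ∀ᶠ j in (hyperfilter ℕ : Filter ℕ), ‖y j‖ ≤ B) :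
    ∃ a, Tendsto y (hyperfilter ℕ) (𝓝 a) := by
  have hK : IsCompact (Metric.closedBall (0 : Euc m) B) := isCompact_closedBall 0 B
  obtain ⟨a, _, ha⟩ := hK.ultrafilter_le_nhds ((hyperfilter ℕ).map y) (by
    simp only [Ultrafilter.coe_map, le_principal_iff, mem_map]
    filter_upwards [hy] with j hj
    simpa using hj)
  exact ⟨a, ha⟩

lemma usc_aux {F : Euc m → Set (Euc m)}
    (hcl : IsClosed {p : Euc m × Euc m | p.2 ∈ F p.1}) {c : ℝ} (hc : 0 < c)
    (hgr : ∀ x, ∀ z ∈ F x, ‖z‖ ≤ c * (1 + ‖x‖)) (y : Euc m) (φ : StrongDual ℝ (Euc m)) (κ : ℝ)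
    (h : ∀ f ∈ F y, φ f < κ) :
    ∃ ρ > 0, ∀ x, dist x y < ρ → ∀ z' f' f, dist z' x ≤ ρ → f' ∈ F z' → dist f f' ≤ ρ → φ f ≤ κ := by
  by_contra hcon
  push Not at hcon
  have hr : ∀ n : ℕ, (0 : ℝ) < 1 / ((n : ℝ) + 1) := fun n => by positivity
  choose x hx z f' f hzx hf' hff hφ using fun n : ℕ => hcon (1 / ((n : ℝ) + 1)) (hr n)
  have hr0 : Tendsto (fun n : ℕ => 1 / ((n : ℝ) + 1)) (hyperfilter ℕ) (𝓝 0) :=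
    tendsto_one_div_add_atTop_nhds_zero_nat.mono_left Nat.hyperfilter_le_atTop
  have hz0 : Tendsto z (hyperfilter ℕ) (𝓝 y) := by
    rw [tendsto_iff_dist_tendsto_zero]
    refine squeeze_zero (fun _ => dist_nonneg) (fun n => ?_)
      (by have h2 := hr0.add hr0; rwa [add_zero] at h2)
    exact (dist_triangle _ (x n) _).trans (add_le_add (hzx n) (hx n).le)
  obtain ⟨a, ha⟩ := exists_ultra_lim (y := z) (B := ‖y‖ + 1) (by
    filter_upwards [hz0.norm.eventually (gt_mem_nhds (lt_add_one ‖y‖))] with n hn using hn.le)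
  obtain ⟨b, hb⟩ := exists_ultra_lim (y := f') (B := c * (1 + (‖y‖ + 1))) (by
    filter_upwards [hz0.norm.eventually (gt_mem_nhds (lt_add_one ‖y‖))] with n hn
    refine (hgr _ _ (hf' n)).trans ?_
    gcongr)
  have hf0 : Tendsto f (hyperfilter ℕ) (𝓝 b) := by
    have : Tendsto (fun n => f n - f' n) (hyperfilter ℕ) (𝓝 0) := by
      rw [tendsto_zero_iff_norm_tendsto_zero]
      refine squeeze_zero (fun _ => norm_nonneg _) (fun n => ?_) hr0
      rw [← dist_eq_norm]; exact hff n
    simpa using this.add hb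
  have hmem : b ∈ F y := by
    have := hcl.mem_of_tendsto (hz0.prodMk_nhds hb) (Eventually.of_forall fun n => hf' n)
    exact this
  have : κ ≤ φ b := ge_of_tendsto ((φ.continuous.tendsto b).comp hf0)
    (Eventually.of_forall fun n => (hφ n).le)
  exact absurd (h b hmem) (not_lt.2 this)

lemma scheme {F : Euc m → Set (Euc m)}
    (hcl : IsClosed {p : Euc m × Euc m | p.2 ∈ F p.1}) {c : ℝ} (hc : 0 < c)
    (hgr : ∀ x, ∀ z ∈ F x, ‖z‖ ≤ c * (1 + ‖x‖))
    (g : ℕ → ℕ → ℝ) (x f v : ℕ → ℕ → Euc m) (e : ℕ → ℝ) (he : Tendsto e atTop (𝓝 0)) (K : ℝ)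
    (hg : ∀ j i, 0 < g j i) (hge : ∀ j i, g j i ≤ e j)
    (hdiv : ∀ j, Tendsto (fun n => ∑ i ∈ Finset.range n, g j i) atTop atTop)
    (hstep : ∀ j i, x j (i + 1) = x j i + g j i • (f j i + v j i))
    (hf : ∀ j i, ∃ z', dist z' (x j i) ≤ e j ∧ ∃ f' ∈ F z', dist (f j i) f' ≤ e j)
    (hB : ∀ j n, 1 + ‖x j n‖ ≤ K * Real.exp (c * ∑ i ∈ Finset.range n, g j i))
    (hv : ∀ j n, ‖∑ i ∈ Finset.range n, g j i • v j i‖ ≤ e j)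
    (l : ℕ → ℕ) (u : ℝ) (hu : Tendsto (fun j => ∑ i ∈ Finset.range (l j), g j i) atTop (𝓝 u))
    (a b : Euc m) (ha : Tendsto (fun j => x j 0) atTop (𝓝 a))
    (hb : Tendsto (fun j => x j (l j)) atTop (𝓝 b)) :
    ∃ z, FwdSol F z ∧ z 0 = a ∧ z u = b := by
  set T : ℕ → ℕ → ℝ := fun j n => ∑ i ∈ Finset.range n, g j i with hT
  set W : ℕ → ℕ → Euc m := fun j n => ∑ i ∈ Finset.range n, g j i • v j i with hW
  have he0 : ∀ j, 0 < e j := fun j => (hg j 0).trans_le (hge j 0)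
  have hTs : ∀ j n, T j (n + 1) = T j n + g j n := fun j n => Finset.sum_range_succ _ _
  have hTm : ∀ j, StrictMono (T j) := fun j => strictMono_nat_of_lt_succ fun n => by
    rw [hTs]; linarith [hg j n]
  have hT0 : ∀ j, T j 0 = 0 := fun j => by simp [hT]
  have hTnn : ∀ j n, 0 ≤ T j n := fun j n => by
    rw [← hT0 j]; exact (hTm j).monotone (Nat.zero_le n)
  have hNex : ∀ (j : ℕ) (s : ℝ), ∃ n, 0 ≤ s → T j n ≤ s ∧ s < T j (n + 1) := by
    intro j s
    have hex : ∃ n, s < T j (n + 1) := by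
      obtain ⟨n, hn⟩ := ((hdiv j).eventually_gt_atTop s).exists
      exact ⟨n, hn.trans (hTm j (Nat.lt_succ_self n))⟩
    classical
    refine ⟨Nat.find hex, fun hs => ⟨?_, Nat.find_spec hex⟩⟩
    rcases Nat.eq_zero_or_pos (Nat.find hex) with h0 | h0
    · rw [h0, hT0]; exact hs
    · have := Nat.find_min hex (m := Nat.find hex - 1) (by omega)
      rw [not_lt, Nat.sub_add_cancel h0] at this
      exact this
  choose N hN using hNex
  set L : ℝ → ℝ := fun R => c * (|K| * Real.exp (c * R) + 1) + 1 with hL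
  have hL0 : ∀ R, 0 ≤ L R := fun R => by positivity
  have hfb : ∀ R j i, e j ≤ 1 → T j i ≤ R → ‖f j i‖ ≤ L R := by
    intro R j i hj hi
    obtain ⟨z', hz', f', hf', hff⟩ := hf j i
    have h1 := hgr z' f' hf'
    have h2 : ‖z'‖ ≤ ‖x j i‖ + 1 := by
      have := norm_le_norm_add_norm_sub' z' (x j i)
      rw [← dist_eq_norm] at this; linarith
    have h3 : ‖f j i‖ ≤ ‖f'‖ + 1 := by
      have := norm_le_norm_add_norm_sub' (f j i) f'
      rw [← dist_eq_norm] at this; linarith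
    have h4 := hB j i
    have h5 : K * Real.exp (c * T j i) ≤ |K| * Real.exp (c * R) := by
      refine mul_le_mul (le_abs_self K) ?_ (Real.exp_pos _).le (abs_nonneg K)
      exact Real.exp_le_exp.2 (mul_le_mul_of_nonneg_left hi hc.le)
    have h6 : c * (1 + ‖z'‖) ≤ c * (|K| * Real.exp (c * R) + 1) := by
      refine mul_le_mul_of_nonneg_left ?_ hc.le
      have h4' : 1 + ‖x j i‖ ≤ K * Real.exp (c * T j i) := h4
      linarith
    simp only [hL]; linarith
  have hinc : ∀ j p q, p ≤ q → x j q - x j p = ∑ i ∈ Finset.Ico p q, g j i • f j i + (W j q - W j p) := by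
    intro j p q hpq
    induction q, hpq using Nat.le_induction with
    | base => simp
    | succ q hpq ih =>
      rw [Finset.sum_Ico_succ_top hpq, hstep, show W j (q+1) = W j q + g j q • v j q from
        Finset.sum_range_succ _ _, smul_add]
      have : x j q = x j p + (∑ i ∈ Finset.Ico p q, g j i • f j i + (W j q - W j p)) := by
        rw [← ih]; abel
      rw [this]; abel
  have hTI : ∀ j p q, p ≤ q → T j q - T j p = ∑ i ∈ Finset.Ico p q, g j i := by
    intro j p q hpq
    rw [Finset.sum_Ico_eq_sub _ hpq]
  have hWW : ∀ j p q, ‖W j q - W j p‖ ≤ 2 * e j := by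
    intro j p q
    refine (norm_sub_le _ _).trans ?_
    linarith [hv j p, hv j q]
  have est1 : ∀ R j p q, e j ≤ 1 → p ≤ q → T j q ≤ R →
      ‖x j q - x j p‖ ≤ L R * (T j q - T j p) + 2 * e j := by
    intro R j p q hj hpq hq
    rw [hinc j p q hpq, hTI j p q hpq]
    refine (norm_add_le _ _).trans (add_le_add ?_ (hWW j p q))
    rw [Finset.mul_sum]
    refine norm_sum_le_of_le _ fun i hi => ?_
    rw [norm_smul, Real.norm_of_nonneg (hg j i).le, mul_comm]
    refine mul_le_mul_of_nonneg_right (hfb R j i hj ?_) (hg j i).le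
    exact ((hTm j).monotone (Finset.mem_Ico.1 hi).2.le).trans hq
  have est2 : ∀ (φ : StrongDual ℝ (Euc m)) (κ : ℝ) j p q, p ≤ q →
      (∀ i, p ≤ i → i < q → φ (f j i) ≤ κ) →
      φ (x j q - x j p) ≤ κ * (T j q - T j p) + ‖φ‖ * (2 * e j) := by
    intro φ κ j p q hpq hi
    rw [hinc j p q hpq, hTI j p q hpq, map_add, map_sum, Finset.mul_sum]
    refine add_le_add (Finset.sum_le_sum fun i h => ?_) ?_
    · rw [map_smul, smul_eq_mul, mul_comm]
      have := Finset.mem_Ico.1 h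
      exact mul_le_mul_of_nonneg_right (hi i this.1 this.2) (hg j i).le
    · refine (le_abs_self _).trans ((φ.le_opNorm _).trans ?_)
      exact mul_le_mul_of_nonneg_left (hWW j p q) (norm_nonneg _)
  have heU : Tendsto e (hyperfilter ℕ) (𝓝 0) := he.mono_left Nat.hyperfilter_le_atTop
  have heU1 : ∀ᶠ j in (hyperfilter ℕ : Filter ℕ), e j ≤ 1 := by
    filter_upwards [heU.eventually (gt_mem_nhds zero_lt_one)] with j hj using hj.le
  have hzex : ∀ s : ℝ, ∃ y, 0 ≤ s → Tendsto (fun j => x j (N j s)) (hyperfilter ℕ) (𝓝 y) := by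
    intro s
    by_cases hs : 0 ≤ s
    · obtain ⟨y, hy⟩ := exists_ultra_lim (y := fun j => x j (N j s)) (B := |K| * Real.exp (c * s)) (by
        refine Eventually.of_forall fun j => ?_
        have h4 : 1 + ‖x j (N j s)‖ ≤ K * Real.exp (c * T j (N j s)) := hB j (N j s)
        have h5 : K * Real.exp (c * T j (N j s)) ≤ |K| * Real.exp (c * s) := by
          refine mul_le_mul (le_abs_self K) ?_ (Real.exp_pos _).le (abs_nonneg K)
          exact Real.exp_le_exp.2 (mul_le_mul_of_nonneg_left (hN j s hs).1 hc.le)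
        linarith)
      exact ⟨y, fun _ => hy⟩
    · exact ⟨0, fun h => absurd h hs⟩
  choose z hz using hzex
  have hNT : ∀ s, 0 ≤ s → Tendsto (fun j => T j (N j s)) (hyperfilter ℕ) (𝓝 s) := by
    intro s hs
    refine tendsto_of_tendsto_of_tendsto_of_le_of_le (g := fun j => s - e j) (h := fun _ => s)
      (by simpa using heU.const_sub s) tendsto_const_nhds (fun j => ?_) (fun j => (hN j s hs).1)
    have h1 := (hN j s hs).2
    rw [hTs] at h1
    have h2 := hge j (N j s)
    show s - e j ≤ T j (N j s)
    linarith
  have hNmono : ∀ j s t, 0 ≤ s → s ≤ t → N j s ≤ N j t := by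
    intro j s t hs hst
    have h1 := (hN j s hs).1
    have h2 := (hN j t (hs.trans hst)).2
    have := (hTm j).lt_iff_lt.1 ((h1.trans hst).trans_lt h2)
    omega
  have hgen : ∀ (l : ℕ → ℕ) (u : ℝ), Tendsto (fun j => T j (l j)) atTop (𝓝 u) →
      ∀ b, Tendsto (fun j => x j (l j)) atTop (𝓝 b) → z u = b := by
    intro l u hu b hb
    have hu0 : 0 ≤ u := ge_of_tendsto' hu fun j => hTnn j _
    have huU := hu.mono_left Nat.hyperfilter_le_atTop
    have hbU := hb.mono_left Nat.hyperfilter_le_atTop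
    have hdT : Tendsto (fun j => L (u + 1) * |T j (l j) - T j (N j u)| + 2 * e j)
        (hyperfilter ℕ) (𝓝 0) := by
      have := (((huU.sub (hNT u hu0)).abs).const_mul (L (u + 1))).add (heU.const_mul 2)
      simpa using this
    have hd : Tendsto (fun j => x j (l j) - x j (N j u)) (hyperfilter ℕ) (𝓝 0) := by
      rw [tendsto_zero_iff_norm_tendsto_zero]
      refine tendsto_of_tendsto_of_tendsto_of_le_of_le' tendsto_const_nhds hdT
        (Eventually.of_forall fun _ => norm_nonneg _) ?_
      filter_upwards [heU1, huU.eventually (gt_mem_nhds (lt_add_one u))] with j h1 h2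
      rcases le_total (l j) (N j u) with h | h
      · rw [norm_sub_rev, abs_sub_comm]
        refine (est1 (u + 1) j _ _ h1 h (by linarith [(hN j u hu0).1])).trans ?_
        have := mul_le_mul_of_nonneg_left (le_abs_self (T j (N j u) - T j (l j))) (hL0 (u+1))
        linarith
      · refine (est1 (u + 1) j _ _ h1 h h2.le).trans ?_
        have := mul_le_mul_of_nonneg_left (le_abs_self (T j (l j) - T j (N j u))) (hL0 (u+1))
        linarith
    exact tendsto_nhds_unique (hz u hu0) (by simpa using hbU.sub hd)
  refine ⟨z, ⟨?_, ?_⟩, ?_, hgen l u hu b hb⟩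
  · intro R
    refine ⟨L R, hL0 R, ?_⟩
    have key : ∀ s ∈ Icc 0 R, ∀ t ∈ Icc 0 R, s ≤ t → ‖z t - z s‖ ≤ L R * (t - s) := by
      intro s hs t ht hst
      have h1 := ((hz t ht.1).sub (hz s hs.1)).norm
      have h2 : Tendsto (fun j => L R * (T j (N j t) - T j (N j s)) + 2 * e j) (hyperfilter ℕ)
          (𝓝 (L R * (t - s) + 2 * 0)) :=
        (((hNT t ht.1).sub (hNT s hs.1)).const_mul _).add (heU.const_mul 2)
      rw [mul_zero, add_zero] at h2
      refine le_of_tendsto_of_tendsto h1 h2 ?_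
      filter_upwards [heU1] with j hj
      exact est1 R j _ _ hj (hNmono j s t hs.1 hst) ((hN j t ht.1).1.trans ht.2)
    intro s hs t ht
    rcases le_total s t with h | h
    · rw [abs_of_nonneg (by linarith)]; exact key s hs t ht h
    · rw [abs_of_nonpos (by linarith), norm_sub_rev, neg_sub]; exact key t ht s hs h
  · intro s hs φ κ hφ
    obtain ⟨ρ, hρ, husc⟩ := usc_aux hcl hc hgr (z s) φ κ hφ
    set Λ := L (s + 1)
    have hΛ : 0 ≤ Λ := hL0 _
    refine ⟨min 1 (ρ / (4 * (Λ + 1))), by positivity, fun t hst htr => ?_⟩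
    have ht0 : 0 ≤ t := hs.trans hst.le
    have ht1 : t - s < 1 := by linarith [min_le_left 1 (ρ / (4 * (Λ + 1)))]
    have ht2 : Λ * (t - s) ≤ ρ / 4 := by
      have h := min_le_right 1 (ρ / (4 * (Λ + 1)))
      have h1 : t - s ≤ ρ / (4 * (Λ + 1)) := by linarith
      rw [le_div_iff₀ (by positivity)] at h1
      nlinarith
    have h1 : Tendsto (fun j => φ (x j (N j t) - x j (N j s))) (hyperfilter ℕ) (𝓝 (φ (z t - z s))) :=
      (φ.continuous.tendsto _).comp ((hz t ht0).sub (hz s hs))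
    have h2 : Tendsto (fun j => κ * (T j (N j t) - T j (N j s)) + ‖φ‖ * (2 * e j)) (hyperfilter ℕ)
        (𝓝 (κ * (t - s) + ‖φ‖ * (2 * 0))) :=
      (((hNT t ht0).sub (hNT s hs)).const_mul _).add ((heU.const_mul 2).const_mul _)
    rw [mul_zero, mul_zero, add_zero] at h2
    refine le_of_tendsto_of_tendsto h1 h2 ?_
    have h3 : ∀ᶠ j in (hyperfilter ℕ : Filter ℕ), dist (x j (N j s)) (z s) < ρ / 4 :=
      (tendsto_iff_dist_tendsto_zero.1 (hz s hs)).eventually (gt_mem_nhds (by positivity))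
    have h4 : ∀ᶠ j in (hyperfilter ℕ : Filter ℕ), 2 * e j + Λ * e j < ρ / 4 := by
      have : Tendsto (fun j => 2 * e j + Λ * e j) (hyperfilter ℕ) (𝓝 0) := by
        simpa using (heU.const_mul 2).add (heU.const_mul Λ)
      exact this.eventually (gt_mem_nhds (by positivity))
    filter_upwards [heU1, h3, h4] with j hj1 hj3 hj4
    have hm := hNmono j s t hs hst.le
    refine est2 φ κ j _ _ hm fun i hi1 hi2 => ?_
    have hTt := (hN j t ht0).1
    have hTs' := (hN j s hs).2
    rw [hTs] at hTs'
    have hge' := hge j (N j s)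
    have hTi : T j i ≤ t := ((hTm j).monotone hi2.le).trans hTt
    have e1 := est1 (s + 1) j (N j s) i hj1 hi1 (by linarith)
    have e2 : Λ * (T j i - T j (N j s)) ≤ Λ * (t - s + e j) :=
      mul_le_mul_of_nonneg_left (by linarith) hΛ
    have e3 : Λ * (t - s + e j) = Λ * (t - s) + Λ * e j := by ring
    have e4 : dist (x j i) (z s) < ρ := by
      refine (dist_triangle _ (x j (N j s)) _).trans_lt ?_
      rw [dist_eq_norm (x j i)]
      linarith
    obtain ⟨z', hz', f', hf', hff⟩ := hf j i
    have : 0 ≤ Λ * e j := mul_nonneg hΛ (he0 j).le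
    have := he0 j
    exact husc (x j i) e4 z' f' (f j i) (by linarith) hf' (by linarith)
  · exact hgen (fun _ => 0) 0 (by simp [hT]) a ha

lemma fwd {F : Euc m → Set (Euc m)} (hne : ∀ x, (F x).Nonempty)
    (hcl : IsClosed {p : Euc m × Euc m | p.2 ∈ F p.1}) {c : ℝ} (hc : 0 < c)
    (hgr : ∀ x, ∀ z ∈ F x, ‖z‖ ≤ c * (1 + ‖x‖))
    (n : ℕ → ℕ) (g : ℕ → ℕ → ℝ) (x f v : ℕ → ℕ → Euc m) (e : ℕ → ℝ)
    (he : Tendsto e atTop (𝓝 0)) (B : ℝ)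
    (hg : ∀ j i, i < n j → 0 < g j i) (hge : ∀ j i, i < n j → g j i ≤ e j)
    (hstep : ∀ j i, i < n j → x j (i + 1) = x j i + g j i • (f j i + v j i))
    (hf : ∀ j i, i < n j → ∃ z', dist z' (x j i) ≤ e j ∧ ∃ f' ∈ F z', dist (f j i) f' ≤ e j)
    (hB : ∀ j i, i ≤ n j → ‖x j i‖ ≤ B)
    (hv : ∀ j k, k ≤ n j → ‖∑ i ∈ Finset.range k, g j i • v j i‖ ≤ e j)
    (u : ℝ) (hu : Tendsto (fun j => ∑ i ∈ Finset.range (n j), g j i) atTop (𝓝 u))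
    (a b : Euc m) (ha : Tendsto (fun j => x j 0) atTop (𝓝 a))
    (hb : Tendsto (fun j => x j (n j)) atTop (𝓝 b)) :
    ∃ z, FwdSol F z ∧ z 0 = a ∧ z u = b := by
  choose sel hsel using hne
  have he0 : ∀ j, 0 ≤ e j := fun j => by simpa using hv j 0 (Nat.zero_le _)
  set q : ℕ → ℝ := fun j => 1 / ((j : ℝ) + 1) with hq
  have hq0 : ∀ j, 0 < q j := fun j => by simp only [hq]; positivity
  set x' : ℕ → ℕ → Euc m := fun j i => Nat.rec (x j 0)
    (fun i y => if i < n j then x j (i + 1) else y + q j • sel y) i with hx'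
  have hx0 : ∀ j, x' j 0 = x j 0 := fun j => rfl
  have hxs : ∀ j i, x' j (i + 1) = if i < n j then x j (i + 1) else x' j i + q j • sel (x' j i) :=
    fun j i => rfl
  have hxx : ∀ j i, i ≤ n j → x' j i = x j i := by
    intro j i hi
    rcases i with _ | i
    · rfl
    · rw [hxs, if_pos (by omega)]
  set g' : ℕ → ℕ → ℝ := fun j i => if i < n j then g j i else q j with hg'
  set f' : ℕ → ℕ → Euc m := fun j i => if i < n j then f j i else sel (x' j i) with hf'
  set v' : ℕ → ℕ → Euc m := fun j i => if i < n j then v j i else 0 with hv'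
  have hgpos : ∀ j i, 0 < g' j i := by
    intro j i
    simp only [hg']; split_ifs with h
    · exact hg j i h
    · exact hq0 j
  have hsum : ∀ j, ∑ i ∈ Finset.range (n j), g' j i = ∑ i ∈ Finset.range (n j), g j i := by
    intro j
    refine Finset.sum_congr rfl fun i hi => ?_
    simp only [hg']; rw [if_pos (Finset.mem_range.1 hi)]
  have hB0 : 0 ≤ B := (norm_nonneg _).trans (hB 0 0 (Nat.zero_le _))
  refine scheme hcl hc hgr g' x' f' v' (fun j => e j + q j) ?_ (1 + B) hgpos ?_ ?_ ?_ ?_ ?_ ?_ n u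
    (by simpa only [hsum] using hu) a b ha ?_
  · have h2 := he.add (tendsto_one_div_add_atTop_nhds_zero_nat (𝕜 := ℝ))
    rwa [add_zero] at h2
  · intro j i
    have := hq0 j
    have := he0 j
    simp only [hg']; split_ifs with h
    · linarith [hge j i h]
    · linarith
  · intro j
    have hlow : ∀ N : ℕ, ((N : ℝ) - n j) * q j ≤ ∑ i ∈ Finset.range N, g' j i := by
      intro N
      induction N with
      | zero =>
        have : 0 ≤ (n j : ℝ) * q j := mul_nonneg (Nat.cast_nonneg _) (hq0 j).le
        simp; linarith
      | succ N ih =>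
        rcases Nat.lt_or_ge N (n j) with h | h
        · have h1 : ((N + 1 : ℕ) : ℝ) ≤ n j := by exact_mod_cast h
          have h2 : 0 ≤ ∑ i ∈ Finset.range (N + 1), g' j i :=
            Finset.sum_nonneg fun i _ => (hgpos j i).le
          have := hq0 j
          nlinarith
        · rw [Finset.sum_range_succ]
          have : g' j N = q j := by simp only [hg']; rw [if_neg (by omega)]
          rw [this]; push_cast; linarith
    refine tendsto_atTop_mono hlow ?_
    refine Tendsto.atTop_mul_const (hq0 j) ?_
    exact tendsto_atTop_add_const_right _ _ tendsto_natCast_atTop_atTop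
  · intro j i
    rcases Nat.lt_or_ge i (n j) with h | h
    · rw [hxx j (i+1) h, hxx j i h.le]
      simp only [hg', hf', hv', if_pos h]
      exact hstep j i h
    · have h' := not_lt.2 h
      rw [hxs]
      simp only [hg', hf', hv', if_neg h', add_zero]
  · intro j i
    have h1 := hq0 j
    have h2 := he0 j
    rcases Nat.lt_or_ge i (n j) with h | h
    · rw [hxx j i h.le]
      simp only [hf', if_pos h]
      obtain ⟨z', hz', w, hw, hfw⟩ := hf j i h
      exact ⟨z', by linarith, w, hw, by linarith⟩
    · simp only [hf', if_neg (not_lt.2 h)]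
      exact ⟨x' j i, by simpa using by linarith, sel (x' j i), hsel _, by simpa using by linarith⟩
  · intro j k
    have hin : ∀ k, k ≤ n j → 1 + ‖x' j k‖ ≤ (1 + B) * Real.exp (c * ∑ i ∈ Finset.range k, g' j i) := by
      intro k hk
      rw [hxx j k hk]
      have h1 := hB j k hk
      have h2 : 1 ≤ Real.exp (c * ∑ i ∈ Finset.range k, g' j i) := by
        rw [Real.one_le_exp_iff]
        exact mul_nonneg hc.le (Finset.sum_nonneg fun i _ => (hgpos j i).le)
      nlinarith
    induction k with
    | zero => exact hin 0 (Nat.zero_le _)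
    | succ k ih =>
      rcases Nat.lt_or_ge k (n j) with h | h
      · exact hin (k + 1) h
      · rw [hxs, if_neg (not_lt.2 h), Finset.sum_range_succ]
        have h0 : g' j k = q j := by simp only [hg']; rw [if_neg (not_lt.2 h)]
        rw [h0, mul_add, Real.exp_add, ← mul_assoc]
        have h1 := hgr _ _ (hsel (x' j k))
        have h2 : ‖x' j k + q j • sel (x' j k)‖ ≤ ‖x' j k‖ + q j * ‖sel (x' j k)‖ := by
          refine (norm_add_le _ _).trans ?_
          rw [norm_smul, Real.norm_of_nonneg (hq0 j).le]
        have h3 := mul_le_mul_of_nonneg_left h1 (hq0 j).le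
        have h4 := Real.add_one_le_exp (c * q j)
        have h5 := norm_nonneg (x' j k)
        calc 1 + ‖x' j k + q j • sel (x' j k)‖ ≤ (1 + ‖x' j k‖) * (c * q j + 1) := by linarith
          _ ≤ _ := mul_le_mul ih h4 (by have := hq0 j; positivity) (by linarith)
  · intro j k
    have : ∀ k, ∑ i ∈ Finset.range k, g' j i • v' j i
        = ∑ i ∈ Finset.range (min k (n j)), g j i • v j i := by
      intro k
      induction k with
      | zero => simp
      | succ k ih =>
        rw [Finset.sum_range_succ, ih]
        rcases Nat.lt_or_ge k (n j) with h | h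
        · rw [min_eq_left h.le, min_eq_left (Nat.succ_le_of_lt h), Finset.sum_range_succ]
          simp only [hg', hv', if_pos h]
        · rw [min_eq_right h, min_eq_right (by omega)]
          simp only [hv', if_neg (not_lt.2 h), smul_zero, add_zero]
    rw [this k]
    linarith [hv j _ (min_le_right k (n j)), hq0 j]
  · simpa only [hxx _ _ le_rfl] using hb

lemma core {F : Euc m → Set (Euc m)} (hF : IsStandardSVM F)
    (n : ℕ → ℕ) (g : ℕ → ℕ → ℝ) (x f v : ℕ → ℕ → Euc m) (e : ℕ → ℝ)
    (he : Tendsto e atTop (𝓝 0)) (B : ℝ)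
    (hg : ∀ j i, i < n j → 0 < g j i) (hge : ∀ j i, i < n j → g j i ≤ e j)
    (hstep : ∀ j i, i < n j → x j (i + 1) = x j i + g j i • (f j i + v j i))
    (hf : ∀ j i, i < n j → ∃ z', dist z' (x j i) ≤ e j ∧ ∃ f' ∈ F z', dist (f j i) f' ≤ e j)
    (hB : ∀ j i, i ≤ n j → ‖x j i‖ ≤ B)
    (hv : ∀ j k, k ≤ n j → ‖∑ i ∈ Finset.range k, g j i • v j i‖ ≤ e j)
    (u : ℝ) (hu : Tendsto (fun j => ∑ i ∈ Finset.range (n j), g j i) atTop (𝓝 u))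
    (a b : Euc m) (ha : Tendsto (fun j => x j 0) atTop (𝓝 a))
    (hb : Tendsto (fun j => x j (n j)) atTop (𝓝 b)) : b ∈ PhiT F u a := by
  obtain ⟨h1, hcl, c, hc, hgr⟩ := hF
  obtain ⟨z, hz, hz0, hzu⟩ := fwd (fun x => (h1 x).1) hcl hc hgr n g x f v e he B hg hge hstep hf hB hv
    u hu a b ha hb
  have hcl' : IsClosed {p : Euc m × Euc m | p.2 ∈ -F p.1} := by
    have : {p : Euc m × Euc m | p.2 ∈ -F p.1}
        = (fun p : Euc m × Euc m => (p.1, -p.2)) ⁻¹' {p : Euc m × Euc m | p.2 ∈ F p.1} := by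
      ext p; simp
    rw [this]
    exact hcl.preimage (by fun_prop)
  obtain ⟨w, hw, hw0, -⟩ := fwd (F := fun x => -F x) (fun x => (h1 x).1.neg) hcl' hc
    (fun x z hz => by simpa using hgr x (-z) hz) (fun _ => 0) (fun _ _ => 0) (fun _ _ => a)
    (fun _ _ => 0) (fun _ _ => 0) (fun _ => 0) tendsto_const_nhds ‖a‖
    (by simp) (by simp) (by simp) (by simp) (by simp) (by simp) 0 (by simp) a a
    tendsto_const_nhds tendsto_const_nhds
  obtain ⟨y, hy, hyz⟩ := glue (fun x => (h1 x).2.1.isClosed) (fun x => (h1 x).2.2) hz hw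
    (hz0.trans hw0.symm)
  have hu0 : 0 ≤ u := ge_of_tendsto' hu fun j => Finset.sum_nonneg fun i hi =>
    (hg j i (Finset.mem_range.1 hi)).le
  exact ⟨y, hy, by rw [hyz 0 le_rfl, hz0], by rw [hyz u hu0, hzu]⟩

lemma tau_succ (γ : ℕ → ℝ) (n : ℕ) : tauOf γ (n + 1) = tauOf γ n + γ (n + 1) :=
  Finset.sum_range_succ _ _

lemma tau_strictMono {γ : ℕ → ℝ} (h : ∀ n, 0 < γ n) : StrictMono (tauOf γ) :=
  strictMono_nat_of_lt_succ fun n => by rw [tau_succ]; linarith [h (n + 1)]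

lemma tau_zero (γ : ℕ → ℝ) : tauOf γ 0 = 0 := by simp [tauOf]

lemma tau_idx {γ : ℕ → ℝ} (h : ∀ n, 0 < γ n) (hdiv : Tendsto (tauOf γ) atTop atTop)
    {k : ℕ} {s : ℝ} (hs : tauOf γ k ≤ s) : ∃ n, k ≤ n ∧ tauOf γ n ≤ s ∧ s < tauOf γ (n + 1) := by
  have hex : ∃ n, s < tauOf γ (n + 1) := by
    obtain ⟨n, hn⟩ := (hdiv.eventually_gt_atTop s).exists
    exact ⟨n, hn.trans (tau_strictMono h (Nat.lt_succ_self n))⟩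
  classical
  have h1 : k ≤ Nat.find hex := by
    have := (tau_strictMono h).lt_iff_lt.1 (hs.trans_lt (Nat.find_spec hex))
    omega
  refine ⟨Nat.find hex, h1, ?_, Nat.find_spec hex⟩
  rcases Nat.eq_or_lt_of_le h1 with h0 | h0
  · rw [← h0]; exact hs
  · have := Nat.find_min hex (m := Nat.find hex - 1) (by omega)
    rwa [not_lt, Nat.sub_add_cancel (by omega)] at this

lemma tau_sub (γ : ℕ → ℝ) {k l : ℕ} (h : k ≤ l) :
    tauOf γ l - tauOf γ k = ∑ i ∈ Finset.Ico k l, γ (i + 1) := by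
  rw [Finset.sum_Ico_eq_sub _ h]; rfl

lemma Fdelta_spec {F : Euc m → Set (Euc m)} (hne : ∀ x, (F x).Nonempty) {δ : ℝ} (hδ : 0 < δ)
    {x y : Euc m} (h : y ∈ Fdelta F δ x) :
    ∃ z', dist z' x ≤ δ ∧ ∃ f' ∈ F z', dist y f' ≤ δ := by
  rw [Fdelta, if_neg hδ.ne'] at h
  obtain ⟨z, hz, hd⟩ := h
  obtain ⟨f', hf', h2⟩ := (Metric.infDist_lt_iff (hne z)).1 hd
  exact ⟨z, hz.le, f', hf', h2.le⟩

lemma compact_step {Ω : Type*} [MeasurableSpace Ω] {μ : Measure Ω}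
    {F : Euc m → Set (Euc m)} (hF : IsStandardSVM F) {M : Set (Euc m)} (hM : IsCompact M)
    {γ : ℕ → ℝ} {Fn : ℕ → Euc m → Set (Euc m)} {U x : ℕ → Ω → Euc m}
    (hgsap : IsGSAP μ F M γ Fn U x) {S O : Set (Euc m)} (hS : IsClosed S) (hO : IsOpen O)
    {T₁ T₂ : ℝ}
    (h : ∀ a ∈ S, ∀ u ∈ Icc T₁ T₂, ∀ b ∈ M, b ∈ PhiT F u a → b ∈ O) :
    ∃ n₀ : ℕ, ∃ ε > 0, ∀ k ≥ n₀, ∀ l ≥ k, ∀ ω, tauOf γ l - tauOf γ k ∈ Icc T₁ T₂ →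
      (∀ i, k ≤ i → i ≤ l → ‖∑ r ∈ Finset.Ico k i, γ (r + 1) • U (r + 1) ω‖ ≤ ε) →
      (∃ s ∈ S, dist s (x k ω) ≤ ε) → x l ω ∈ O := by
  obtain ⟨hγ, hdiv, hγ0, ⟨C, hC⟩, hstep, -, hxM, hFn⟩ := hgsap
  by_contra hcon
  push Not at hcon
  have hr : ∀ n : ℕ, (0 : ℝ) < 1 / ((n : ℝ) + 1) := fun n => by positivity
  have hn0 : ∀ j : ℕ, ∃ n₀, (∀ n ≥ n₀, γ n ≤ 1 / ((j : ℝ) + 1)) ∧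
      ∀ n ≥ n₀, ∀ ω, Fn n (x n ω) ⊆ Fdelta F (1 / ((j : ℝ) + 1)) (x n ω) := by
    intro j
    obtain ⟨n1, h1⟩ := eventually_atTop.1 (hγ0.eventually (gt_mem_nhds (hr j)))
    obtain ⟨n2, h2⟩ := hFn _ (hr j)
    exact ⟨max n1 n2, fun n hn => (h1 n (le_trans (le_max_left _ _) hn)).le,
      fun n hn => h2 n (le_trans (le_max_right _ _) hn)⟩
  choose n₀ hn1 hn2 using hn0
  choose k hk l hkl ω hτ hnoise hs hxO using fun j => hcon (n₀ j) _ (hr j)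
  choose s hsS hsd using hs
  choose f hf hfe using fun n w => mem_smul_set.1 (hstep n w)
  have hK : IsCompact (M ×ˢ M ×ˢ Icc T₁ T₂) := hM.prod (hM.prod isCompact_Icc)
  obtain ⟨⟨a, b, u⟩, hmem, φ, hφ, hlim⟩ := hK.tendsto_subseq
    (x := fun j => (x (k j) (ω j), x (l j) (ω j), tauOf γ (l j) - tauOf γ (k j)))
    (fun j => ⟨hxM _ _, hxM _ _, hτ j⟩)
  have hla := (continuous_fst.tendsto _).comp hlim
  have hlb := (continuous_fst.tendsto _).comp ((continuous_snd.tendsto _).comp hlim)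
  have hlu := (continuous_snd.tendsto _).comp ((continuous_snd.tendsto _).comp hlim)
  simp only [Function.comp_def] at hla hlb hlu
  obtain ⟨B, hB⟩ := hM.isBounded.exists_norm_le
  have hr0 : Tendsto (fun j : ℕ => 1 / ((φ j : ℝ) + 1)) atTop (𝓝 0) :=
    (tendsto_one_div_add_atTop_nhds_zero_nat (𝕜 := ℝ)).comp hφ.tendsto_atTop
  have haS : a ∈ S := by
    refine hS.mem_of_tendsto (f := fun j => s (φ j)) (b := atTop) ?_
      (Eventually.of_forall fun j => hsS (φ j))
    have : Tendsto (fun j => s (φ j) - x (k (φ j)) (ω (φ j))) atTop (𝓝 0) := by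
      rw [tendsto_zero_iff_norm_tendsto_zero]
      refine squeeze_zero (fun _ => norm_nonneg _) (fun j => ?_) hr0
      rw [← dist_eq_norm]; exact hsd (φ j)
    simpa using this.add hla
  have hbO : b ∉ O := fun hb => by
    obtain ⟨j, hj⟩ := (hlb.eventually (hO.mem_nhds hb)).exists
    exact hxO (φ j) hj
  refine hbO (h a haS u hmem.2.2 b hmem.2.1 ?_)
  refine core hF (fun j => l (φ j) - k (φ j)) (fun j i => γ (k (φ j) + i + 1))
    (fun j i => x (k (φ j) + i) (ω (φ j))) (fun j i => f (k (φ j) + i) (ω (φ j)))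
    (fun j i => U (k (φ j) + i + 1) (ω (φ j))) (fun j => 1 / ((φ j : ℝ) + 1)) hr0 B
    (fun j i _ => hγ _) ?_ ?_ ?_ (fun j i _ => hB _ (hxM _ _)) ?_ u ?_ a b ?_ ?_
  · intro j i _
    refine hn1 (φ j) _ ?_
    have := hk (φ j); omega
  · intro j i _
    have := hfe (k (φ j) + i) (ω (φ j))
    rw [smul_add, this]
    simp only [← add_assoc]
    abel
  · intro j i _
    refine Fdelta_spec (fun x => (hF.1 x).1) (hr _) (hn2 (φ j) _ ?_ _ (hf _ _))
    have := hk (φ j); omega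
  · intro j i hi
    have h1 := hnoise (φ j) (k (φ j) + i) (by omega) (by have := hkl (φ j); omega)
    rw [Finset.sum_Ico_eq_sum_range] at h1
    simpa using h1
  · refine hlu.congr fun j => ?_
    rw [tau_sub γ (hkl (φ j)), Finset.sum_Ico_eq_sum_range]
  · simpa using hla
  · refine hlb.congr fun j => ?_
    rw [Nat.add_sub_cancel' (hkl (φ j))]

lemma near {Ω : Type*} [MeasurableSpace Ω] {μ : Measure Ω}
    {F : Euc m → Set (Euc m)} (hF : IsStandardSVM F) {M : Set (Euc m)} (hM : IsCompact M)
    {γ : ℕ → ℝ} {Fn : ℕ → Euc m → Set (Euc m)} {U x : ℕ → Ω → Euc m}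
    (hgsap : IsGSAP μ F M γ Fn U x) {X : ℝ → Ω → Euc m}
    (hX : ∀ (n : ℕ) (s : ℝ), 0 ≤ s → s ≤ γ (n + 1) → ∀ ω,
      X (tauOf γ n + s) ω = x n ω + (s / γ (n + 1)) • (x (n + 1) ω - x n ω))
    {η : ℝ} (hη : 0 < η) : ∃ n₀ : ℕ, ∀ n ≥ n₀, ∀ s ≥ tauOf γ n, ∃ k ≥ n, ∀ ω,
      dist (X s ω) (x k ω) < η := by
  obtain ⟨hγ, hdiv, hγ0, ⟨C, hC⟩, hstep, -, hxM, hFn⟩ := hgsap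
  obtain ⟨B, hB⟩ := hM.isBounded.exists_norm_le
  obtain ⟨hF1, -, c, hc, hgr⟩ := hF
  obtain ⟨n1, h1⟩ := hFn 1 one_pos
  set D := c * (|B| + 2) + 1 + |C| with hD
  have hD0 : 0 < D := by positivity
  obtain ⟨n2, h2⟩ := eventually_atTop.1 (hγ0.eventually (gt_mem_nhds (show 0 < η / D by positivity)))
  refine ⟨max n1 n2, fun n hn s hs => ?_⟩
  obtain ⟨k, hk, hk1, hk2⟩ := tau_idx hγ hdiv hs
  refine ⟨k, hk, fun ω => ?_⟩
  have hkn1 : n1 ≤ k := (le_max_left _ _).trans (hn.trans hk)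
  have hkn2 : n2 ≤ k + 1 := ((le_max_right _ _).trans (hn.trans hk)).trans (Nat.le_succ k)
  rw [tau_succ] at hk2
  have hXs := hX k (s - tauOf γ k) (by linarith) (by linarith) ω
  rw [add_sub_cancel] at hXs
  rw [dist_eq_norm, hXs, add_sub_cancel_left, norm_smul]
  have hq : ‖(s - tauOf γ k) / γ (k + 1)‖ ≤ 1 := by
    rw [Real.norm_of_nonneg (div_nonneg (by linarith) (hγ _).le), div_le_one (hγ _)]
    linarith
  obtain ⟨f, hf, hfe⟩ := mem_smul_set.1 (hstep k ω)
  obtain ⟨z', hz', f', hf', hff⟩ := Fdelta_spec (fun x => (hF1 x).1) one_pos (h1 k hkn1 ω hf)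
  have hfb : ‖f‖ ≤ c * (|B| + 2) + 1 := by
    have e1 := hgr z' f' hf'
    have e2 : ‖z'‖ ≤ ‖x k ω‖ + 1 := by
      have := norm_le_norm_add_norm_sub' z' (x k ω)
      rw [← dist_eq_norm] at this; linarith
    have e3 : ‖f‖ ≤ ‖f'‖ + 1 := by
      have := norm_le_norm_add_norm_sub' f f'
      rw [← dist_eq_norm] at this; linarith
    have e4 := hB _ (hxM k ω)
    have e5 : c * (1 + ‖z'‖) ≤ c * (|B| + 2) := by
      refine mul_le_mul_of_nonneg_left ?_ hc.le
      linarith [le_abs_self B]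
    linarith
  have hxx : x (k + 1) ω - x k ω = γ (k + 1) • (f + U (k + 1) ω) := by
    rw [smul_add, hfe]; abel
  have hlt : ‖x (k + 1) ω - x k ω‖ < η := by
    rw [hxx, norm_smul, Real.norm_of_nonneg (hγ _).le]
    have e1 : ‖f + U (k + 1) ω‖ ≤ D := by
      refine (norm_add_le _ _).trans ?_
      linarith [hC (k + 1) ω, le_abs_self C]
    have e2 := h2 (k + 1) hkn2
    rw [lt_div_iff₀ hD0] at e2
    exact (mul_le_mul_of_nonneg_left e1 (hγ _).le).trans_lt e2
  refine lt_of_le_of_lt ?_ hlt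
  exact mul_le_of_le_one_left (norm_nonneg _) hq

lemma noise_bound {Ω : Type*} {γ : ℕ → ℝ} (hγ : ∀ n, 0 < γ n)
    {U : ℕ → Ω → Euc m} {C : ℝ} (hC : ∀ n ω, ‖U n ω‖ ≤ C) {k l : ℕ} (hkl : k ≤ l) (ω : Ω) :
    ‖∑ r ∈ Finset.Ico k l, γ (r + 1) • U (r + 1) ω‖ ≤ C * (tauOf γ l - tauOf γ k) := by
  rw [tau_sub γ hkl, Finset.mul_sum]
  refine norm_sum_le_of_le _ fun i _ => ?_
  rw [norm_smul, Real.norm_of_nonneg (hγ _).le, mul_comm]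
  exact mul_le_mul_of_nonneg_right (hC _ _) (hγ _).le

lemma mIdx_spec {γ : ℕ → ℝ} (hγ : ∀ n, 0 < γ n) (hdiv : Tendsto (tauOf γ) atTop atTop)
    {t : ℝ} (ht : 0 ≤ t) (i : ℕ) : i ≤ mIdx γ t ↔ tauOf γ i ≤ t := by
  have hbdd : BddAbove {j | tauOf γ j ≤ t} := by
    obtain ⟨n, hn⟩ := (hdiv.eventually_gt_atTop t).exists
    refine ⟨n, fun j hj => ?_⟩
    exact ((tau_strictMono hγ).lt_iff_lt.1 (lt_of_le_of_lt hj hn)).le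
  have hne : {j | tauOf γ j ≤ t}.Nonempty := ⟨0, by simpa [tau_zero] using ht⟩
  constructor
  · intro h
    exact ((tau_strictMono hγ).monotone h).trans (Nat.sSup_mem hne hbdd)
  · intro h
    exact le_csSup hbdd h

lemma delta_facts {Ω : Type*} {γ : ℕ → ℝ} (hγ : ∀ n, 0 < γ n)
    (hdiv : Tendsto (tauOf γ) atTop atTop)
    {U : ℕ → Ω → Euc m} {C : ℝ} (hC : ∀ n ω, ‖U n ω‖ ≤ C) {T : ℝ} (hT : 0 ≤ T) {n : ℕ} {ω : Ω}
    {ε : ℝ} (hε : 0 ≤ ε) (h : ⨆ k : Ici n, DeltaNT γ U T (k : ℕ) ω < ε) {k i : ℕ} (hk : n ≤ k)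
    (hki : k ≤ i) (hi : tauOf γ i ≤ tauOf γ k + T) :
    ‖∑ r ∈ Finset.Ico k i, γ (r + 1) • U (r + 1) ω‖ ≤ ε := by
  have htau : ∀ k, 0 ≤ tauOf γ k := fun k => by
    rw [← tau_zero γ]; exact (tau_strictMono hγ).monotone (Nat.zero_le _)
  have hC0 : 0 ≤ C := (norm_nonneg _).trans (hC 0 ω)
  have hb : ∀ k i, k ≤ i → i ≤ mIdx γ (tauOf γ k + T) →
      ‖∑ r ∈ Finset.Ico k i, γ (r + 1) • U (r + 1) ω‖ ≤ C * T := by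
    intro k i hki hi
    rw [mIdx_spec hγ hdiv (add_nonneg (htau k) hT)] at hi
    refine (noise_bound hγ hC hki ω).trans ?_
    exact mul_le_mul_of_nonneg_left (by linarith) hC0
  have hb1 : ∀ k, BddAbove (range fun i : {i : ℕ // k < i ∧ i ≤ mIdx γ (tauOf γ k + T)} =>
      ‖∑ r ∈ Finset.Ico k (i : ℕ), γ (r + 1) • U (r + 1) ω‖) := by
    intro k
    refine ⟨C * T, ?_⟩
    rintro _ ⟨i, rfl⟩
    exact hb k i i.2.1.le i.2.2
  have hb2 : BddAbove (range fun k : Ici n => DeltaNT γ U T (k : ℕ) ω) := by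
    refine ⟨C * T, ?_⟩
    rintro _ ⟨k, rfl⟩
    exact Real.iSup_le (fun i => hb k i i.2.1.le i.2.2) (mul_nonneg hC0 hT)
  rcases hki.eq_or_lt with h0 | h0
  · subst h0; simpa using hε
  · have hi' : i ≤ mIdx γ (tauOf γ k + T) := (mIdx_spec hγ hdiv (add_nonneg (htau k) hT) i).2 hi
    have h1 := le_ciSup (hb1 k) ⟨i, h0, hi'⟩
    have h2 := le_ciSup hb2 ⟨k, hk⟩
    exact (h1.trans (h2.trans h.le))

lemma sum_shift (γ : ℕ → ℝ) {n k : ℕ} (h : n ≤ k) :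
    ∑ i ∈ Finset.Ico n k, γ i = tauOf γ k - tauOf γ n + γ n - γ k := by
  induction k, h using Nat.le_induction with
  | base => simp
  | succ k hk ih => rw [Finset.sum_Ico_succ_top hk, ih, tau_succ]; ring

lemma noise_iii {Ω : Type*} {γ : ℕ → ℝ} (hγ : ∀ n, 0 < γ n) (hγ0 : Tendsto γ atTop (𝓝 0))
    {U : ℕ → Ω → Euc m} {C : ℝ} (hC : ∀ n ω, ‖U n ω‖ ≤ C) {T T' : ℝ} (hT : T + 1 ≤ T') {ω : Ω}
    (h : Tendsto (fun n => ⨆ k : {k : ℕ // ∑ i ∈ Finset.Ico n k, γ i ≤ T'},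
      ‖∑ i ∈ Finset.Ico n (k : ℕ), γ (i + 1) • U (i + 1) ω‖) atTop (𝓝 0)) {η : ℝ} (hη : 0 < η) :
    ∃ n₀, ∀ k ≥ n₀, ∀ i ≥ k, tauOf γ i ≤ tauOf γ k + T →
      ‖∑ r ∈ Finset.Ico k i, γ (r + 1) • U (r + 1) ω‖ ≤ η := by
  have hC0 : 0 ≤ C := (norm_nonneg _).trans (hC 0 ω)
  obtain ⟨G, hG⟩ := hγ0.bddAbove_range
  have hG' : ∀ n, γ n ≤ G := fun n => hG ⟨n, rfl⟩
  have hbdd : ∀ n, BddAbove (range fun k : {k : ℕ // ∑ i ∈ Finset.Ico n k, γ i ≤ T'} =>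
      ‖∑ i ∈ Finset.Ico n (k : ℕ), γ (i + 1) • U (i + 1) ω‖) := by
    intro n
    refine ⟨C * (|T'| + G), ?_⟩
    rintro _ ⟨⟨k, hk⟩, rfl⟩
    have hG0 := (hγ 0).le.trans (hG' 0)
    rcases le_total n k with hnk | hnk
    · refine (noise_bound hγ hC hnk ω).trans (mul_le_mul_of_nonneg_left ?_ hC0)
      rw [sum_shift γ hnk] at hk
      linarith [hγ n, hG' k, le_abs_self T']
    · simp only [Finset.Ico_eq_empty_of_le hnk, Finset.sum_empty, norm_zero]
      positivity
  obtain ⟨n1, h1⟩ := eventually_atTop.1 (h.eventually (gt_mem_nhds hη))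
  obtain ⟨n2, h2⟩ := eventually_atTop.1 (hγ0.eventually (gt_mem_nhds one_pos))
  refine ⟨max n1 n2, fun k hk i hi hτ => ?_⟩
  have hk1 := h1 k ((le_max_left _ _).trans hk)
  have hk2 := h2 k ((le_max_right _ _).trans hk)
  refine (le_ciSup (hbdd k) ⟨i, ?_⟩).trans hk1.le
  rw [sum_shift γ hi]
  linarith [hγ i]

lemma measurable_delta {Ω : Type*} {mΩ : MeasurableSpace Ω} {γ : ℕ → ℝ} {U : ℕ → Ω → Euc m}
    (hU : ∀ n, Measurable (U n)) (T : ℝ) (n : ℕ) :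
    Measurable fun ω => ⨆ k : Ici n, DeltaNT γ U T (k : ℕ) ω := by
  refine Measurable.iSup fun k => ?_
  unfold DeltaNT
  refine Measurable.iSup fun i => ?_
  exact (Finset.measurable_sum _ fun r _ => (hU (r + 1)).const_smul (γ (r + 1))).norm

lemma prob_step {Ω : Type*} {m' mΩ : MeasurableSpace Ω} (μ : Measure Ω) [IsProbabilityMeasure μ]
    (hm : m' ≤ mΩ) {G E : Set Ω} (hG : MeasurableSet[m'] G)
    (hE : MeasurableSet[mΩ] E)
    (h : ∀ᵐ ω ∂μ, (μ[E.indicator (fun _ => (1:ℝ)) | m']) ω ≤ 1 / 2) (hpos : 0 < μ G) :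
    0 < μ (G ∩ Eᶜ) := by
  have hint : Integrable (E.indicator (fun _ => (1:ℝ))) μ := (integrable_const 1).indicator hE
  have h1 := setIntegral_condExp hm hint hG
  have h2 : ∫ ω in G, E.indicator (fun _ => (1:ℝ)) ω ∂μ = μ.real (G ∩ E) := by
    rw [setIntegral_indicator hE]; simp
  have h3 : ∫ ω in G, (μ[E.indicator (fun _ => (1:ℝ)) | m']) ω ∂μ ≤ ∫ ω in G, (1/2 : ℝ) ∂μ :=
    setIntegral_mono_ae integrable_condExp.integrableOn (integrable_const _).integrableOn h
  rw [h1, h2] at h3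
  simp only [integral_const, smul_eq_mul, measureReal_restrict_apply_univ] at h3
  have h4 : 0 < μ.real G := ENNReal.toReal_pos hpos.ne' (measure_ne_top _ _)
  by_contra h0
  have h0' : μ (G ∩ Eᶜ) = 0 := by simpa using h0
  have h5 : μ.real (G ∩ E) = μ.real G := by
    have := measureReal_inter_add_sdiff (μ := μ) (s := G) hE
    rw [diff_eq, measureReal_def μ (G ∩ Eᶜ), h0'] at this
    simpa using this
  rw [h5] at h3
  linarith

lemma basin_step {F : Euc m → Set (Euc m)} {A M O : Set (Euc m)} (hM : IsCompact M) (hO : IsOpen O)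
    (hAO : A ⊆ O) {p : Euc m} (hp : p ∈ basinSV F A) :
    ∃ T > 0, ∀ t ≥ T, ∀ b ∈ M, b ∈ PhiT F t p → b ∈ O := by
  set Z : ℕ → Set (Euc m) := fun n => closure {y | ∃ s ≥ (n : ℝ), y ∈ PhiT F s p} with hZ
  have hanti : Antitone Z := by
    intro a b hab
    refine closure_mono ?_
    rintro y ⟨s, hs, hy⟩
    exact ⟨s, le_trans (by exact_mod_cast hab) hs, hy⟩
  have hK : IsCompact (M \ O) := hM.diff hO
  have hemp : (M \ O) ∩ ⋂ n, Z n = ∅ := by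
    rw [eq_empty_iff_forall_notMem]
    rintro y ⟨⟨-, hyO⟩, hy⟩
    refine hyO (hAO (hp ?_))
    simp only [omegaLimitSV, mem_iInter]
    intro t _
    obtain ⟨n, hn⟩ := exists_nat_ge t
    refine closure_mono ?_ (mem_iInter.1 hy n)
    rintro y ⟨s, hs, hy⟩
    exact ⟨s, le_trans hn hs, hy⟩
  obtain ⟨n, hn⟩ := hK.elim_directed_family_closed Z (fun n => isClosed_closure) hemp
    (directed_of_isDirected_le hanti)
  refine ⟨n + 1, by positivity, fun t ht b hb hbt => ?_⟩
  by_contra hbO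
  have : b ∈ (M \ O) ∩ Z n := ⟨⟨hb, hbO⟩, subset_closure ⟨t, by linarith, hbt⟩⟩
  rw [hn] at this
  exact this

/-- Deterministic trapping and convergence. -/
lemma det_conv {Ω : Type*} [MeasurableSpace Ω] {μ : Measure Ω}
    {F : Euc m → Set (Euc m)} (hF : IsStandardSVM F) {M : Set (Euc m)} (hM : IsCompact M)
    {γ : ℕ → ℝ} {Fn : ℕ → Euc m → Set (Euc m)} {U x : ℕ → Ω → Euc m}
    (hgsap : IsGSAP μ F M γ Fn U x) {X : ℝ → Ω → Euc m}
    (hX : ∀ (n : ℕ) (s : ℝ), 0 ≤ s → s ≤ γ (n + 1) → ∀ ω,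
      X (tauOf γ n + s) ω = x n ω + (s / γ (n + 1)) • (x (n + 1) ω - x n ω))
    {A : Set (Euc m)} (hA : IsAttractorSV F A) {p : Euc m} (hp : p ∈ basinSV F A) :
    ∃ n₀ : ℕ, ∃ ε > 0, ∃ T > 0, ∀ k ≥ n₀, ∀ ω,
      (∀ N : ℕ, Tendsto (fun n => ⨆ k : {k : ℕ // ∑ i ∈ Finset.Ico n k, γ i ≤ (N : ℝ) + 1},
        ‖∑ i ∈ Finset.Ico n (k : ℕ), γ (i + 1) • U (i + 1) ω‖) atTop (𝓝 0)) →
      dist (x k ω) p < ε → (⨆ j : Ici k, DeltaNT γ U T (j : ℕ) ω) < ε →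
      limitSet (fun t => X t ω) ⊆ A := by
  obtain ⟨hγ, hdiv, hγ0, ⟨C, hC⟩, -, -, hxM, -⟩ := id hgsap
  have hdiv' : Tendsto (tauOf γ) atTop atTop := hdiv
  have hmono := tau_strictMono hγ
  obtain ⟨-, hAc, -, V, hVo, hAV, hVatt⟩ := hA
  obtain ⟨r, hr, hrV⟩ := hAc.exists_cthickening_subset_open hVo hAV
  -- phase 1
  obtain ⟨T₁, hT₁, hb1⟩ := basin_step hM (Metric.isOpen_thickening (δ := r) (E := A))
    (Metric.self_subset_thickening hr A) hp
  obtain ⟨n₁, ε₁, hε₁, ph1⟩ := compact_step hF hM hgsap (S := {p}) (O := Metric.thickening r A)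
    (T₁ := T₁) (T₂ := T₁ + 1) isClosed_singleton Metric.isOpen_thickening (by
      intro a ha u hu b hb hba
      rw [mem_singleton_iff] at ha
      subst ha
      exact hb1 u hu.1 b hb hba)
  -- phases 2 and 3
  have ph : ∀ η > 0, ∃ T > 0, ∃ n₀ : ℕ, ∃ ε > 0, ∀ k ≥ n₀, ∀ l ≥ k, ∀ ω,
      tauOf γ l - tauOf γ k ∈ Icc T (3 * T) →
      (∀ i, k ≤ i → i ≤ l → ‖∑ r ∈ Finset.Ico k i, γ (r + 1) • U (r + 1) ω‖ ≤ ε) →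
      x k ω ∈ Metric.thickening r A → x l ω ∈ Metric.thickening η A := by
    intro η hη
    obtain ⟨T, hT, hTV⟩ := hVatt η hη
    obtain ⟨n, ε, hε, h⟩ := compact_step hF hM hgsap (S := Metric.cthickening r A)
      (O := Metric.thickening η A) (T₁ := T) (T₂ := 3 * T) Metric.isClosed_cthickening
      Metric.isOpen_thickening (fun a ha u hu b _ hba => hTV u hu.1 a (hrV ha) hba)
    exact ⟨T, hT, n, ε, hε, fun k hk l hl ω h1 h2 h3 => h k hk l hl ω h1 h2
      ⟨x k ω, Metric.thickening_subset_cthickening _ _ h3, by simpa using hε.le⟩⟩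
  obtain ⟨T₂, hT₂, n₂, ε₂, hε₂, ph2⟩ := ph r hr
  obtain ⟨n₃, hn₃⟩ := eventually_atTop.1 (hγ0.eventually (gt_mem_nhds (lt_min one_pos hT₂)))
  refine ⟨max n₁ (max n₂ n₃), min ε₁ ε₂, lt_min hε₁ hε₂, max (T₁ + 1) (3 * T₂), by positivity, ?_⟩
  intro k hk ω hiii hxk hsup
  have hk1 : n₁ ≤ k := (le_max_left _ _).trans hk
  have hk2 : n₂ ≤ k := (le_max_left _ _).trans ((le_max_right _ _).trans hk)
  have hk3 : n₃ ≤ k := (le_max_right _ _).trans ((le_max_right _ _).trans hk)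
  have hnoise : ∀ k' i, k ≤ k' → k' ≤ i → tauOf γ i ≤ tauOf γ k' + max (T₁ + 1) (3 * T₂) →
      ‖∑ r ∈ Finset.Ico k' i, γ (r + 1) • U (r + 1) ω‖ ≤ min ε₁ ε₂ := fun k' i h1 h2 h3 =>
    delta_facts hγ hdiv' hC (by positivity) (lt_min hε₁ hε₂).le hsup h1 h2 h3
  -- a point near `A`
  obtain ⟨l₁, hkl₁, hl1, hl2⟩ := tau_idx hγ hdiv' (show tauOf γ k ≤ tauOf γ k + (T₁ + 1) by linarith)
  have hxl₁ : x l₁ ω ∈ Metric.thickening r A := by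
    refine ph1 k hk1 l₁ hkl₁ ω ⟨?_, by linarith⟩ ?_ ⟨p, rfl, ?_⟩
    · rw [tau_succ] at hl2
      have := (hn₃ (l₁ + 1) (by omega)).trans_le (min_le_left _ _)
      linarith
    · intro i hi hil
      refine (hnoise k i le_rfl hi ?_).trans (min_le_left _ _)
      have := hmono.monotone hil
      linarith [le_max_left (T₁ + 1) (3 * T₂)]
    · rw [dist_comm]; exact hxk.le.trans (min_le_left _ _)
  have step2 : ∀ k' l, k ≤ k' → k' ≤ l → tauOf γ l - tauOf γ k' ∈ Icc T₂ (3 * T₂) →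
      x k' ω ∈ Metric.thickening r A → x l ω ∈ Metric.thickening r A := by
    intro k' l h1 h2 h3 h4
    refine ph2 k' (hk2.trans h1) l h2 ω h3 (fun i hi hil => ?_) h4
    refine (hnoise k' i h1 hi ?_).trans (min_le_right _ _)
    have := hmono.monotone hil
    linarith [le_max_right (T₁ + 1) (3 * T₂), h3.2]
  have trap : ∀ l, l₁ ≤ l → tauOf γ l₁ + T₂ ≤ tauOf γ l → x l ω ∈ Metric.thickening r A := by
    intro l
    induction l using Nat.strong_induction_on with
    | _ l ih =>
      intro hl hτ
      by_cases h3 : tauOf γ l ≤ tauOf γ l₁ + 3 * T₂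
      · exact step2 l₁ l hkl₁ hl ⟨by linarith, by linarith⟩ hxl₁
      · push Not at h3
        obtain ⟨l', hl', e1, e2⟩ := tau_idx hγ hdiv'
          (show tauOf γ l₁ ≤ tauOf γ l - T₂ by linarith)
        rw [tau_succ] at e2
        have e3 := (hn₃ (l' + 1) (by omega)).trans_le (min_le_right _ _)
        have hlt : l' < l := hmono.lt_iff_lt.1 (by linarith)
        exact step2 l' l (hkl₁.trans hl') hlt.le ⟨by linarith, by linarith⟩
          (ih l' hlt hl' (by linarith))
  have htail : ∀ η > 0, ∃ n, ∀ l ≥ n, x l ω ∈ Metric.thickening η A := by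
    intro η hη
    obtain ⟨T, hT, n, ε, hε, h⟩ := ph η hη
    obtain ⟨N, hN⟩ := exists_nat_ge (3 * T)
    obtain ⟨n', hn'⟩ := noise_iii hγ hγ0 hC (show 3 * T + 1 ≤ (N : ℝ) + 1 by linarith) (hiii N) hε
    obtain ⟨n₄, hn₄⟩ := eventually_atTop.1 (hγ0.eventually (gt_mem_nhds hT))
    obtain ⟨n₅, hn₅⟩ := eventually_atTop.1 (hdiv'.eventually_ge_atTop (tauOf γ l₁ + T₂))
    set q := max (max n n') (max n₄ (max n₅ l₁)) with hq
    obtain ⟨n₆, hn₆⟩ := eventually_atTop.1 (hdiv'.eventually_ge_atTop (tauOf γ q + T))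
    refine ⟨n₆, fun l hl => ?_⟩
    obtain ⟨l', hl', e1, e2⟩ := tau_idx hγ hdiv'
      (show tauOf γ q ≤ tauOf γ l - T by linarith [hn₆ l hl])
    rw [tau_succ] at e2
    have hq1 : n ≤ l' := by omega
    have hq2 : n' ≤ l' := by omega
    have hq3 : n₄ ≤ l' + 1 := by omega
    have hq4 : n₅ ≤ l' := by omega
    have hq5 : l₁ ≤ l' := by omega
    have e3 := hn₄ (l' + 1) hq3
    have hlt : l' < l := hmono.lt_iff_lt.1 (by linarith)
    refine h l' hq1 l hlt.le ω ⟨by linarith, by linarith⟩ (fun i hi hil => ?_)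
      (trap l' hq5 (hn₅ l' hq4))
    refine hn' l' hq2 i hi ?_
    have := hmono.monotone hil
    linarith
  intro y hy
  have hcl : y ∈ closure A := by
    rw [Metric.closure_eq_iInter_cthickening]
    simp only [mem_iInter]
    intro δ hδ
    obtain ⟨n, hn⟩ := htail (δ / 2) (by positivity)
    obtain ⟨n', hn'⟩ := near hF hM hgsap hX (show 0 < δ / 2 by positivity)
    simp only [limitSet, mem_iInter] at hy
    have hτ0 : 0 ≤ tauOf γ (max n n') := by
      rw [← tau_zero γ]; exact hmono.monotone (Nat.zero_le _)
    refine closure_minimal ?_ Metric.isClosed_cthickening (hy (tauOf γ (max n n')) hτ0)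
    rintro _ ⟨s, hs, rfl⟩
    obtain ⟨j, hj, hd⟩ := hn' _ (le_max_right n n') s hs
    obtain ⟨a, ha, hda⟩ := Metric.mem_thickening_iff.1 (hn j ((le_max_left _ _).trans hj))
    refine Metric.thickening_subset_cthickening _ _ (Metric.mem_thickening_iff.2 ⟨a, ha, ?_⟩)
    have := dist_triangle (X s ω) (x j ω) a
    linarith [hd ω]
  rwa [hAc.isClosed.closure_eq] at hcl

end helpers

/-- (Main theorem.) Let `(x_n)` be a generalised stochastic
approximation process relative to a standard `F`, whose noise satisfies condition
(bruit2). If `A` is an attractor for the induced set-valued dynamical system whose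
basin contains an attainable point of the interpolated process `X`, then
`P(L(X) ⊆ A) > 0`. -/
theorem main_convergence_with_positive_probability
    {m : ℕ} {Ω : Type*} {mΩ : MeasurableSpace Ω}
    (μ : Measure Ω) [IsProbabilityMeasure μ] (𝓕 : Filtration ℕ mΩ)
    (F : Euc m → Set (Euc m)) (hF : IsStandardSVM F)
    (M : Set (Euc m)) (hM : IsCompact M)
    (γ : ℕ → ℝ) (Fn : ℕ → Euc m → Set (Euc m))
    (U : ℕ → Ω → Euc m) (x : ℕ → Ω → Euc m)
    (hgsap : IsGSAP μ F M γ Fn U x)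
    (hxadapted : Adapted 𝓕 x) (hUadapted : Adapted 𝓕 U)
    (hbruit : Bruit2 μ (fun n => 𝓕 n) γ U)
    (X : ℝ → Ω → Euc m)
    (hX : ∀ (n : ℕ) (s : ℝ), 0 ≤ s → s ≤ γ (n + 1) → ∀ ω,
      X (tauOf γ n + s) ω = x n ω + (s / γ (n + 1)) • (x (n + 1) ω - x n ω))
    (A : Set (Euc m)) (hA : IsAttractorSV F A)
    (hatt : ∃ p, Attainable μ X p ∧ p ∈ basinSV F A) :
    0 < μ {ω | limitSet (fun t => X t ω) ⊆ A} := by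
  obtain ⟨p, hatt, hp⟩ := hatt
  obtain ⟨n₀, ε, hε, T, hT, hdet⟩ := det_conv hF hM hgsap hX hA hp
  obtain ⟨w, hw, hcond⟩ := hbruit
  obtain ⟨n₁, hn₁⟩ := near hF hM hgsap hX (show 0 < ε / 2 by positivity)
  obtain ⟨n₂, hn₂⟩ := eventually_atTop.1
    ((hw ε hε T hT).2.eventually (gt_mem_nhds (show (0:ℝ) < 1 / 2 by norm_num)))
  obtain ⟨hγ, hdiv, -, -, -, hiii, -, -⟩ := id hgsap
  set q := max n₀ (max n₁ n₂) with hq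
  have hτ0 : 0 < tauOf γ (q + 1) := by
    rw [← tau_zero γ]; exact tau_strictMono hγ (Nat.succ_pos _)
  have hpos := hatt (tauOf γ (q + 1)) hτ0 (Metric.ball p (ε / 2)) (Metric.ball_mem_nhds p (by positivity))
  have hsub : {ω | ∃ s ≥ tauOf γ (q + 1), X s ω ∈ Metric.ball p (ε / 2)}
      ⊆ ⋃ k : Ici q, x (k : ℕ) ⁻¹' Metric.ball p ε := by
    rintro ω ⟨s, hs, hXs⟩
    obtain ⟨k, hk, hd⟩ := hn₁ (q + 1) (by omega) s hs
    refine mem_iUnion.2 ⟨⟨k, by show q ≤ k; omega⟩, ?_⟩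
    rw [Metric.mem_ball] at hXs
    show dist (x k ω) p < ε
    have := dist_triangle_left (x k ω) p (X s ω)
    linarith [hd ω]
  obtain ⟨⟨k, hk⟩, hkpos⟩ : ∃ k : Ici q, 0 < μ (x (k : ℕ) ⁻¹' Metric.ball p ε) := by
    by_contra hcon
    push Not at hcon
    have : μ (⋃ k : Ici q, x (k : ℕ) ⁻¹' Metric.ball p ε) = 0 :=
      measure_iUnion_null fun k => le_antisymm (hcon k) bot_le
    exact absurd (measure_mono_null hsub this) hpos.ne'
  have hk' : q ≤ k := hk
  have hUm : ∀ n, Measurable (U n) := fun n => (hUadapted n).mono (𝓕.le n) le_rfl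
  have hE : MeasurableSet {ω' | ε ≤ ⨆ j : Ici k, DeltaNT γ U T (j : ℕ) ω'} :=
    measurableSet_le measurable_const (measurable_delta hUm T k)
  have hG : MeasurableSet[𝓕 k] (x k ⁻¹' Metric.ball p ε) := hxadapted k measurableSet_ball
  have hpp := prob_step μ (𝓕.le k) hG hE (by
    filter_upwards [hcond ε hε T hT k] with ω hω
    exact hω.trans (hn₂ k (by omega)).le) hkpos
  have hae : ∀ᵐ ω ∂μ, ∀ N : ℕ, Tendsto
      (fun n => ⨆ k : {k : ℕ // ∑ i ∈ Finset.Ico n k, γ i ≤ (N : ℝ) + 1},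
        ‖∑ i ∈ Finset.Ico n (k : ℕ), γ (i + 1) • U (i + 1) ω‖) atTop (𝓝 0) :=
    ae_all_iff.2 fun N => hiii _ (by positivity)
  refine lt_of_lt_of_le hpp (measure_mono_ae ?_)
  filter_upwards [hae] with ω hω hmem
  refine hdet k (by omega) ω hω hmem.1 ?_
  exact not_le.1 hmem.2
end
end

section
/- Let (K,d) be a compact metric space and let Λ_n, Λ : K ⇒ K be set-valued maps with nonempty values such that Fix(Λ) := {x ∈ K : x ∈ Λ(x)} is nonempty, Λ_{n+1}(x) ⊂ Λ_n(x) for every n and every x ∈ K, and whenever x_n → x in K one has limsup_n Λ_n(x_n) ⊂ Λ(x). Then for every δ > 0 there exist ε > 0 and n₀ ∈ ℕ such that for all n > n₀ and all x ∈ K: d(x, Λ_n(x)) ≤ ε implies d(x, Fix(Λ)) ≤ δ. -/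
open MeasureTheory Filter Topology Metric Set Pointwise

noncomputable section

/-- (Lemma `distancefixgen`.) Let `(K,d)` be a compact metric space
and `Λ_n, Λ : K ⇒ K` set-valued maps with nonempty values such that `Fix(Λ) ≠ ∅`,
`Λ_{n+1}(x) ⊆ Λ_n(x)`, and `x_n → x` implies `limsup_n Λ_n(x_n) ⊆ Λ(x)`. Then for
every `δ > 0` there are `ε > 0` and `n₀` with: for `n > n₀`,
`d(x, Λ_n(x)) ≤ ε ⟹ d(x, Fix Λ) ≤ δ`. -/
theorem dist_to_fix_of_dist_to_LambdaN
    {K : Type*} [MetricSpace K] [CompactSpace K]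
    (Λn : ℕ → K → Set K) (Λ : K → Set K)
    (hΛnne : ∀ n x, (Λn n x).Nonempty) (hΛne : ∀ x, (Λ x).Nonempty)
    (hFix : {x : K | x ∈ Λ x}.Nonempty)
    (hmono : ∀ (n : ℕ) (x : K), Λn (n + 1) x ⊆ Λn n x)
    (hlimsup : ∀ (x : K) (xs : ℕ → K), Tendsto xs atTop (𝓝 x) →
      setLimsup (fun n => Λn n (xs n)) ⊆ Λ x) :
    ∀ δ > 0, ∃ ε > 0, ∃ n₀ : ℕ, ∀ n > n₀, ∀ x : K,
      Metric.infDist x (Λn n x) ≤ ε → Metric.infDist x {y : K | y ∈ Λ y} ≤ δ := by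
  intro δ hδ
  by_contra hcon
  push Not at hcon
  have hanti : ∀ (x : K), Antitone (fun n => Λn n x) :=
    fun x => antitone_nat_of_succ_le (fun n => hmono n x)
  have h1 : ∀ k : ℕ, ∃ n > k, ∃ x : K,
      Metric.infDist x (Λn n x) ≤ 1 / ((k : ℝ) + 1) ∧
        δ < Metric.infDist x {y : K | y ∈ Λ y} :=
    fun k => hcon (1 / ((k : ℝ) + 1)) (by positivity) k
  choose N hN x hx hxδ using h1
  obtain ⟨a, -, φ, hφ, hlim⟩ := isCompact_univ.tendsto_subseq (fun n => Set.mem_univ (x n))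
  have ha : a ∈ Λ a := by
    apply hlimsup a (x ∘ φ) hlim
    intro U hU
    obtain ⟨r, hr, hrU⟩ := Metric.mem_nhds_iff.mp hU
    have e1 : ∀ᶠ n in atTop, dist ((x ∘ φ) n) a < r / 2 :=
      (Metric.tendsto_nhds.mp hlim) (r / 2) (by positivity)
    have e2 : ∀ᶠ n in atTop, 1 / (((φ n : ℕ) : ℝ) + 1) < r / 2 :=
      hφ.tendsto_atTop.eventually
        ((tendsto_one_div_add_atTop_nhds_zero_nat (𝕜 := ℝ)).eventually_lt_const
          (by positivity))
    refine Nat.frequently_atTop_iff_infinite.mp (Eventually.frequently ?_)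
    filter_upwards [e1, e2] with n hn1 hn2
    obtain ⟨y, hy, hyd⟩ := (Metric.infDist_lt_iff (hΛnne (N (φ n)) (x (φ n)))).mp
      (lt_of_le_of_lt (hx (φ n)) hn2)
    refine ⟨y, hrU ?_, hanti (x (φ n)) ((hφ.id_le n).trans (hN (φ n)).le) hy⟩
    rw [Metric.mem_ball]
    have := dist_triangle y (x (φ n)) a
    rw [dist_comm y (x (φ n))] at this
    simp only [Function.comp] at hn1
    linarith
  have h0 : Metric.infDist a {y : K | y ∈ Λ y} = 0 := Metric.infDist_zero_of_mem ha
  have h2 : Tendsto (fun n => Metric.infDist ((x ∘ φ) n) {y : K | y ∈ Λ y}) atTop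
      (𝓝 (Metric.infDist a {y : K | y ∈ Λ y})) :=
    ((Metric.continuous_infDist_pt _).tendsto a).comp hlim
  have h3 := ge_of_tendsto' h2 (fun n => (hxδ (φ n)).le)
  linarith
end
end
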